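/- arXiv:1902.06623 — 14 statements merged into one kernel-verified Lean document; each statement's English description precedes it below -/
import Mathlib

section
/- Let a ∈ ℝⁿ, γ > 0 and θ ∈ ℝ with θγ aᵀΣa < 1, so that Σ̃ := (Σ⁻¹ − θγ a aᵀ)⁻¹ is well defined and positive definite. Let Z = ∫ exp(θ V_a(x)) dN(μ,Σ)(x), where V_a(x) = γ/2 · ⟨a, x−μ⟩² − ⟨a, x⟩. Then the probability measure whose density with respect to N(μ,Σ) is x ↦ exp(θ V_a(x))/Z equals the multivariate Gaussian N(μ̃, Σ̃) with mean μ̃ = μ − θ Σ̃ a and covariance Σ̃. -/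
/-!
The product of the tilting weight `exp (θ V)` and the density of `N(μ, Σ)` is the exponential of a
quadratic polynomial. Its quadratic part is `-1/2 ⟨y, P y⟩` with `y = x - μ` and
`P = Σ⁻¹ - θγ a aᵀ`; completing the square (`complete_square`) shows that the product is a constant
multiple `C` of the density of `N(μ̃, Σ̃)`, where `Σ̃ = P⁻¹` (`exp_mul_gaussianPdf`). Since
Gaussian densities integrate to one (`integral_gaussianPdf`), integrating gives `Z = C`, so dividing
by `Z` leaves exactly the density of `N(μ̃, Σ̃)`.

Positive definiteness of `P` follows from the Cauchy–Schwarz inequality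
`⟨a, x⟩² ≤ ⟨a, Σ a⟩ ⟨x, Σ⁻¹ x⟩` (`sq_dotProduct_le`) and `θγ ⟨a, Σ a⟩ < 1`.
-/

open Matrix MeasureTheory

/-- The density of the multivariate Gaussian `N(μ, Sig)` on `ℝⁿ`. -/
noncomputable def gaussianPdf {n : ℕ} (μ : Fin n → ℝ) (Sig : Matrix (Fin n) (Fin n) ℝ)
    (x : Fin n → ℝ) : ℝ :=
  Real.exp (-(1 / 2) * ((x - μ) ⬝ᵥ Sig⁻¹ *ᵥ (x - μ))) /
    Real.sqrt ((2 * Real.pi) ^ n * Sig.det)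

/-- The multivariate Gaussian probability measure `N(μ, Sig)` on `ℝⁿ`. -/
noncomputable def gaussianMeasure {n : ℕ} (μ : Fin n → ℝ) (Sig : Matrix (Fin n) (Fin n) ℝ) :
    Measure (Fin n → ℝ) :=
  volume.withDensity fun x => ENNReal.ofReal (gaussianPdf μ Sig x)

lemma dotProduct_mulVec_comm_of_posDef {n : ℕ} {P : Matrix (Fin n) (Fin n) ℝ} (hP : P.PosDef)
    (x y : Fin n → ℝ) : x ⬝ᵥ P *ᵥ y = y ⬝ᵥ P *ᵥ x := by
  have h : Pᵀ = P := by
    simpa only [IsHermitian, conjTranspose_eq_transpose_of_trivial] using hP.isHermitian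
  rw [dotProduct_mulVec, ← mulVec_transpose, h, dotProduct_comm]

/-- Cauchy–Schwarz for the inner product given by `Sig⁻¹`, applied to `Sig *ᵥ a` and `x`. -/
lemma sq_dotProduct_le {n : ℕ} {Sig : Matrix (Fin n) (Fin n) ℝ} (hSig : Sig.PosDef)
    (a x : Fin n → ℝ) :
    (a ⬝ᵥ x) ^ 2 ≤ (a ⬝ᵥ Sig *ᵥ a) * (x ⬝ᵥ Sig⁻¹ *ᵥ x) := by
  have hdet : IsUnit Sig.det := hSig.det_pos.ne'.isUnit
  have hinv : Sig⁻¹ *ᵥ (Sig *ᵥ a) = a := by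
    rw [mulVec_mulVec, nonsing_inv_mul _ hdet, one_mulVec]
  -- The quadratic form `Sig⁻¹` at `x - t • (Sig *ᵥ a)`, as a nonnegative polynomial in `t`.
  have key : ∀ t : ℝ, 0 ≤ (a ⬝ᵥ Sig *ᵥ a) * (t * t) + (-2 * (a ⬝ᵥ x)) * t
      + x ⬝ᵥ Sig⁻¹ *ᵥ x := by
    intro t
    have h := hSig.inv.posSemidef.dotProduct_mulVec_nonneg (x - t • (Sig *ᵥ a))
    have hc := dotProduct_mulVec_comm_of_posDef hSig.inv (Sig *ᵥ a) x
    rw [hinv] at hc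
    simp only [star_trivial, mulVec_sub, mulVec_smul, hinv, dotProduct_sub, sub_dotProduct,
      smul_dotProduct, dotProduct_smul, smul_eq_mul, hc, dotProduct_comm x a,
      dotProduct_comm (Sig *ᵥ a) a] at h
    linarith
  have := discrim_le_zero key
  rw [discrim] at this
  nlinarith

lemma dotProduct_sub_vecMulVec {n : ℕ} (Q : Matrix (Fin n) (Fin n) ℝ) (c : ℝ)
    (a x : Fin n → ℝ) :
    x ⬝ᵥ (Q - c • vecMulVec a a) *ᵥ x = x ⬝ᵥ Q *ᵥ x - c * (a ⬝ᵥ x) ^ 2 := by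
  rw [sub_mulVec, smul_mulVec, vecMulVec_mulVec, dotProduct_sub, dotProduct_smul, op_smul_eq_smul,
    dotProduct_smul, dotProduct_comm x a]
  simp only [smul_eq_mul]
  ring

lemma posDef_inv_sub_vecMulVec {n : ℕ} {Sig : Matrix (Fin n) (Fin n) ℝ} (hSig : Sig.PosDef)
    (a : Fin n → ℝ) (c : ℝ) (hc : c * (a ⬝ᵥ Sig *ᵥ a) < 1) :
    (Sig⁻¹ - c • vecMulVec a a).PosDef := by
  refine .of_dotProduct_mulVec_pos ?_ fun x hx => ?_
  · refine hSig.inv.isHermitian.sub ?_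
    ext i j
    simp [vecMulVec_apply, mul_comm]
  · rw [star_trivial, dotProduct_sub_vecMulVec]
    have hq : 0 < x ⬝ᵥ Sig⁻¹ *ᵥ x := by simpa using hSig.inv.dotProduct_mulVec_pos hx
    have hcs := sq_dotProduct_le hSig a x
    rcases le_or_gt c 0 with h | h
    · nlinarith [mul_nonneg (neg_nonneg.2 h) (sq_nonneg (a ⬝ᵥ x))]
    · nlinarith [mul_le_mul_of_nonneg_left hcs h.le, mul_lt_mul_of_pos_right hc hq]

/-- With `P = Bᵀ B`, the substitution `y = B x` turns the integral into a product of `n` standard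
one-dimensional Gaussian integrals. -/
lemma integral_exp_quadratic {n : ℕ} {P : Matrix (Fin n) (Fin n) ℝ} (hP : P.PosDef) :
    ∫ x : Fin n → ℝ, Real.exp (-(1 / 2) * (x ⬝ᵥ P *ᵥ x)) =
      Real.sqrt ((2 * Real.pi) ^ n * P.det⁻¹) := by
  obtain ⟨B, hB⟩ : ∃ B : Matrix (Fin n) (Fin n) ℝ, P = Bᵀ * B := by
    open scoped MatrixOrder in
    obtain ⟨B, hB⟩ := CStarAlgebra.nonneg_iff_eq_star_mul_self.mp hP.posSemidef.nonneg
    exact ⟨B, by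
      simpa only [star_eq_conjTranspose, conjTranspose_eq_transpose_of_trivial] using hB⟩
  have hdet : P.det = B.det ^ 2 := by rw [hB, det_mul, det_transpose, sq]
  have hB0 : B.det ≠ 0 := by
    intro h
    have := hP.det_pos
    simp [hdet, h] at this
  have hquad : ∀ x : Fin n → ℝ, Real.exp (-(1 / 2) * (x ⬝ᵥ P *ᵥ x)) =
      ∏ i, Real.exp (-(1 / 2) * (toLin' B x) i ^ 2) := by
    intro x
    rw [← Real.exp_sum, ← Finset.mul_sum, hB, ← mulVec_mulVec, dotProduct_mulVec,
      vecMul_transpose, toLin'_apply]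
    simp [dotProduct, sq]
  have hmeas : Measurable (toLin' B) := (toLin' B).continuous_of_finiteDimensional.measurable
  have hcont : Continuous fun y : Fin n → ℝ => ∏ i, Real.exp (-(1 / 2) * y i ^ 2) := by fun_prop
  simp_rw [hquad]
  rw [← integral_map (μ := volume) (φ := toLin' B)
      (f := fun y : Fin n → ℝ => ∏ i, Real.exp (-(1 / 2) * y i ^ 2)) hmeas.aemeasurable
      hcont.aestronglyMeasurable,
    Real.map_matrix_volume_pi_eq_smul_volume_pi hB0, integral_smul_measure,
    integral_fintype_prod_volume_eq_pow (fun t : ℝ => Real.exp (-(1 / 2) * t ^ 2)),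
    integral_gaussian, ENNReal.toReal_ofReal (abs_nonneg _), Fintype.card_fin, hdet, smul_eq_mul,
    Real.sqrt_mul (by positivity), ← inv_pow, Real.sqrt_sq_eq_abs, mul_comm]
  congr 1
  rw [show Real.pi / (1 / 2) = 2 * Real.pi by ring, eq_comm, Real.sqrt_eq_iff_mul_self_eq_of_pos,
    ← mul_pow, Real.mul_self_sqrt (by positivity)]
  positivity

lemma integral_gaussianPdf {n : ℕ} (μ : Fin n → ℝ) {Sig : Matrix (Fin n) (Fin n) ℝ}
    (hSig : Sig.PosDef) : ∫ x, gaussianPdf μ Sig x = 1 := by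
  have hpos := hSig.det_pos
  unfold gaussianPdf
  rw [integral_div, integral_sub_right_eq_self
    (fun x : Fin n → ℝ => Real.exp (-(1 / 2) * (x ⬝ᵥ Sig⁻¹ *ᵥ x))) μ,
    integral_exp_quadratic hSig.inv, det_nonsing_inv, Ring.inverse_eq_inv', inv_inv]
  exact div_self (by positivity)

lemma complete_square {n : ℕ} {P : Matrix (Fin n) (Fin n) ℝ} (hP : P.PosDef) (θ : ℝ)
    (a y : Fin n → ℝ) :
    (y + θ • (P⁻¹ *ᵥ a)) ⬝ᵥ P *ᵥ (y + θ • (P⁻¹ *ᵥ a)) =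
      y ⬝ᵥ P *ᵥ y + 2 * θ * (a ⬝ᵥ y) + θ ^ 2 * (a ⬝ᵥ P⁻¹ *ᵥ a) := by
  have hinv : P *ᵥ (P⁻¹ *ᵥ a) = a := by
    rw [mulVec_mulVec, mul_nonsing_inv _ hP.det_pos.ne'.isUnit, one_mulVec]
  have hc := dotProduct_mulVec_comm_of_posDef hP (P⁻¹ *ᵥ a) y
  rw [hinv] at hc
  simp only [mulVec_add, mulVec_smul, hinv, dotProduct_add, add_dotProduct, smul_dotProduct,
    dotProduct_smul, smul_eq_mul, hc, dotProduct_comm y a, dotProduct_comm (P⁻¹ *ᵥ a) a]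
  ring

lemma gaussianPdf_nonneg {n : ℕ} (μ : Fin n → ℝ) (Sig : Matrix (Fin n) (Fin n) ℝ)
    (x : Fin n → ℝ) : 0 ≤ gaussianPdf μ Sig x := by
  unfold gaussianPdf; positivity

lemma continuous_gaussianPdf {n : ℕ} (μ : Fin n → ℝ) (Sig : Matrix (Fin n) (Fin n) ℝ) :
    Continuous (gaussianPdf μ Sig) := by
  unfold gaussianPdf
  have : Continuous fun x : Fin n → ℝ => (x - μ) ⬝ᵥ Sig⁻¹ *ᵥ (x - μ) := by fun_prop
  fun_prop

/-- The tilted density is proportional to a Gaussian density. Only the positivity of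
the constant is recorded: integrating both sides identifies it with the partition function `Z`. -/
lemma exp_mul_gaussianPdf {n : ℕ} (μ : Fin n → ℝ) {Sig P : Matrix (Fin n) (Fin n) ℝ}
    (hSig : Sig.PosDef) (a : Fin n → ℝ) (γ θ : ℝ)
    (hPdef : P = Sig⁻¹ - (θ * γ) • vecMulVec a a) (hP : P.PosDef) :
    ∃ C : ℝ, 0 < C ∧ ∀ x, gaussianPdf μ Sig x *
      Real.exp (θ * (γ / 2 * (a ⬝ᵥ (x - μ)) ^ 2 - a ⬝ᵥ x)) =
        C * gaussianPdf (μ - θ • (P⁻¹ *ᵥ a)) P⁻¹ x := by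
  have hs := hSig.det_pos
  have hp := hP.inv.det_pos
  -- The remainder of the square, times the ratio of the two normalising factors.
  refine ⟨Real.exp (θ ^ 2 / 2 * (a ⬝ᵥ P⁻¹ *ᵥ a) - θ * (a ⬝ᵥ μ)) *
    Real.sqrt ((2 * Real.pi) ^ n * P⁻¹.det) / Real.sqrt ((2 * Real.pi) ^ n * Sig.det),
    by positivity, fun x => ?_⟩
  have hPP : P⁻¹⁻¹ = P := nonsing_inv_nonsing_inv _ hP.det_pos.ne'.isUnit
  have hx : x - (μ - θ • (P⁻¹ *ᵥ a)) = (x - μ) + θ • (P⁻¹ *ᵥ a) := by abel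
  have hexp : -(1 / 2) * ((x - μ) ⬝ᵥ Sig⁻¹ *ᵥ (x - μ)) +
        θ * (γ / 2 * (a ⬝ᵥ (x - μ)) ^ 2 - a ⬝ᵥ x) =
      (θ ^ 2 / 2 * (a ⬝ᵥ P⁻¹ *ᵥ a) - θ * (a ⬝ᵥ μ)) +
        -(1 / 2) * ((x - (μ - θ • (P⁻¹ *ᵥ a))) ⬝ᵥ P⁻¹⁻¹ *ᵥ (x - (μ - θ • (P⁻¹ *ᵥ a)))) := by
    have hq : (x - μ) ⬝ᵥ P *ᵥ (x - μ) =
        (x - μ) ⬝ᵥ Sig⁻¹ *ᵥ (x - μ) - θ * γ * (a ⬝ᵥ (x - μ)) ^ 2 := by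
      rw [hPdef, dotProduct_sub_vecMulVec]
    have hlin : a ⬝ᵥ (x - μ) = a ⬝ᵥ x - a ⬝ᵥ μ := dotProduct_sub _ _ _
    rw [hPP, hx, complete_square hP, hq, hlin]
    ring
  have hsp : Real.sqrt ((2 * Real.pi) ^ n * P⁻¹.det) ≠ 0 := by positivity
  unfold gaussianPdf
  rw [div_mul_eq_mul_div, ← Real.exp_add, hexp, Real.exp_add]
  field_simp

/-- Under `θγ aᵀΣa < 1`, the matrix `Σ̃ = (Σ⁻¹ − θγ a aᵀ)⁻¹` is
positive definite, and the exponentially tilted measure with density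
`exp(θ V_a(x))/Z` w.r.t. `N(μ,Σ)`, where `V_a(x) = γ/2 ⟨a,x−μ⟩² − ⟨a,x⟩` and
`Z = E[exp(θ V_a(X))]`, is the multivariate Gaussian `N(μ̃, Σ̃)` with
`μ̃ = μ − θ Σ̃ a`. -/
theorem tilted_gaussian_eq_gaussian {n : ℕ} (hn : 1 ≤ n)
    (μ : Fin n → ℝ) (Sig : Matrix (Fin n) (Fin n) ℝ) (hSig : Sig.PosDef)
    (a : Fin n → ℝ) (γ θ : ℝ) (hγ : 0 < γ) (hθ : θ * γ * (a ⬝ᵥ Sig *ᵥ a) < 1)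
    (V : (Fin n → ℝ) → ℝ) (hV : ∀ x, V x = γ / 2 * (a ⬝ᵥ (x - μ)) ^ 2 - a ⬝ᵥ x)
    (Z : ℝ) (hZ : Z = ∫ x, Real.exp (θ * V x) ∂(gaussianMeasure μ Sig))
    (Sigt : Matrix (Fin n) (Fin n) ℝ) (hSigt : Sigt = (Sig⁻¹ - (θ * γ) • vecMulVec a a)⁻¹)
    (μt : Fin n → ℝ) (hμt : μt = μ - θ • (Sigt *ᵥ a)) :
    Sigt.PosDef ∧
    (gaussianMeasure μ Sig).withDensity
        (fun x => ENNReal.ofReal (Real.exp (θ * V x) / Z)) = gaussianMeasure μt Sigt := by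
  obtain rfl : V = fun x => γ / 2 * (a ⬝ᵥ (x - μ)) ^ 2 - a ⬝ᵥ x := funext hV
  have hP := posDef_inv_sub_vecMulVec hSig a (θ * γ) hθ
  obtain ⟨C, hC, hprod⟩ := exp_mul_gaussianPdf μ hSig a γ θ rfl hP
  rw [← hSigt, ← hμt] at hprod
  have hSt : Sigt.PosDef := hSigt ▸ hP.inv
  have hpdf : Measurable fun x => ENNReal.ofReal (gaussianPdf μ Sig x) :=
    (continuous_gaussianPdf μ Sig).measurable.ennreal_ofReal
  have hZC : Z = C := by
    rw [hZ, gaussianMeasure, integral_withDensity_eq_integral_toReal_smul hpdf (by simp)]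
    simp_rw [ENNReal.toReal_ofReal (gaussianPdf_nonneg μ Sig _), smul_eq_mul, hprod]
    rw [integral_const_mul, integral_gaussianPdf μt hSt, mul_one]
  have hcont : Continuous fun x : Fin n → ℝ =>
      Real.exp (θ * (γ / 2 * (a ⬝ᵥ (x - μ)) ^ 2 - a ⬝ᵥ x)) / Z := by
    have h1 : Continuous fun x : Fin n → ℝ => a ⬝ᵥ (x - μ) := by fun_prop
    have h2 : Continuous fun x : Fin n → ℝ => a ⬝ᵥ x := by fun_prop
    fun_prop
  refine ⟨hSt, ?_⟩
  rw [gaussianMeasure, gaussianMeasure,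
    ← withDensity_mul _ hpdf hcont.measurable.ennreal_ofReal]
  congr 1
  ext x
  rw [Pi.mul_apply, ← ENNReal.ofReal_mul (gaussianPdf_nonneg μ Sig x), ← mul_div_assoc, hprod,
    hZC, mul_div_cancel_left₀ _ hC.ne']
end

section
/- Let P be a probability measure on a measurable space Ω, let V : Ω → ℝ be measurable, and let I ⊆ ℝ be an open interval such that ω ↦ exp(θ V(ω)) is P-integrable for every θ ∈ I. Define Z(θ) = ∫ exp(θV) dP, m_θ = exp(θV)/Z(θ), and the relative entropy R(θ) = ∫ m_θ ln m_θ dP. Then R is monotone nondecreasing on I ∩ [0,∞) and monotone nonincreasing on I ∩ (−∞,0]. -/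
/-!
With `Λ = log Z` the cumulant generating function and `L(θ) = 𝔼_{m_θ}[V]` the tilted mean,
`R(θ) = θ L(θ) - Λ(θ)`. Since `Λ` is convex with slope `L`, it lies above each of its tangent
lines: `Λ(t) + (s - t) L(t) ≤ Λ(s)` (`log_integral_exp_tangent_le`). Adding this to the same
inequality with `s` and `t` exchanged shows that `L` is nondecreasing, and then
`R(t) - R(s) ≥ s (L(t) - L(s)) ≥ 0` for `0 ≤ s ≤ t`; the case `s ≤ t ≤ 0` is symmetric.
No differentiation under the integral sign is needed.
-/

open MeasureTheory

/-- The log-moment generating function lies above its tangent line at `t`, whose slope is the mean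
of `V` under the tilted measure: this is Jensen's inequality for `exp` under that measure. -/
lemma log_integral_exp_tangent_le {Ω : Type*} [MeasurableSpace Ω]
    (P : Measure Ω) [IsProbabilityMeasure P] (V : Ω → ℝ) {s t : ℝ}
    (hs : Integrable (fun ω => Real.exp (s * V ω)) P)
    (ht : Integrable (fun ω => Real.exp (t * V ω)) P)
    (hVt : Integrable (fun ω => V ω * Real.exp (t * V ω)) P) :
    Real.log (∫ ω, Real.exp (t * V ω) ∂P)
      + (s - t) * ((∫ ω, V ω * Real.exp (t * V ω) ∂P) / ∫ ω, Real.exp (t * V ω) ∂P)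
      ≤ Real.log (∫ ω, Real.exp (s * V ω) ∂P) := by
  have hZ : 0 < ∫ ω, Real.exp (t * V ω) ∂P := integral_exp_pos ht
  set z := ∫ ω, Real.exp (t * V ω) ∂P with hz
  set a := ∫ ω, V ω * Real.exp (t * V ω) ∂P with ha
  set c := (s - t) * (a / z) with hc
  have hint : ∫ ω, (Real.exp c * (1 - c) * Real.exp (t * V ω)
      + Real.exp c * (s - t) * (V ω * Real.exp (t * V ω))) ∂P = Real.exp c * z := by
    rw [integral_add (ht.const_mul _) (hVt.const_mul _), integral_const_mul, integral_const_mul,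
      ← hz, ← ha]
    have h : c * z = (s - t) * a := by rw [hc]; field_simp
    linear_combination -Real.exp c * h
  have hle : Real.exp c * z ≤ ∫ ω, Real.exp (s * V ω) ∂P := by
    rw [← hint]
    refine integral_mono ((ht.const_mul _).add (hVt.const_mul _)) hs fun ω => ?_
    -- `1 + x ≤ exp x` at `x = (s - t) V - c`, scaled by `exp c * exp (t V)`
    have h1 := Real.add_one_le_exp ((s - t) * V ω - c)
    have h2 : Real.exp (s * V ω)
        = Real.exp c * Real.exp (t * V ω) * Real.exp ((s - t) * V ω - c) := by
      rw [← Real.exp_add, ← Real.exp_add]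
      ring_nf
    have h3 := mul_le_mul_of_nonneg_left h1
      (by positivity : 0 ≤ Real.exp c * Real.exp (t * V ω))
    simp only
    rw [h2]
    linarith
  have hlog := Real.log_le_log (by positivity) hle
  rw [Real.log_mul (Real.exp_ne_zero c) hZ.ne', Real.log_exp] at hlog
  linarith

/-- The relative entropy of the tilted density is the Legendre expression `θ L(θ) - log Z(θ)`. -/
lemma integral_tilted_mul_log {Ω : Type*} [MeasurableSpace Ω]
    (P : Measure Ω) [IsProbabilityMeasure P] (V : Ω → ℝ) {t z : ℝ}
    (hz : z = ∫ ω, Real.exp (t * V ω) ∂P)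
    (ht : Integrable (fun ω => Real.exp (t * V ω)) P)
    (hVt : Integrable (fun ω => V ω * Real.exp (t * V ω)) P) :
    ∫ ω, Real.exp (t * V ω) / z * Real.log (Real.exp (t * V ω) / z) ∂P
      = t * ((∫ ω, V ω * Real.exp (t * V ω) ∂P) / z) - Real.log z := by
  have hZ : 0 < z := hz ▸ integral_exp_pos ht
  have h (ω : Ω) : Real.exp (t * V ω) / z * Real.log (Real.exp (t * V ω) / z)
      = t / z * (V ω * Real.exp (t * V ω)) - Real.log z / z * Real.exp (t * V ω) := by
    rw [Real.log_div (Real.exp_ne_zero _) hZ.ne', Real.log_exp]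
    ring
  simp_rw [h]
  rw [integral_sub (hVt.const_mul _) (ht.const_mul _), integral_const_mul, integral_const_mul, ← hz]
  field_simp

/-- Let `P` be a probability measure, `V` measurable, `I ⊆ ℝ` an open
interval on which `exp(θ V)` is `P`-integrable. With `Z(θ) = ∫ exp(θV) dP`,
`m_θ = exp(θV)/Z(θ)` and the relative entropy `R(θ) = ∫ m_θ ln m_θ dP`, the map `R`
is monotone nondecreasing on `I ∩ [0,∞)` and monotone nonincreasing on `I ∩ (−∞,0]`. -/
theorem relativeEntropy_tilted_monotone {Ω : Type*} [MeasurableSpace Ω]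
    (P : Measure Ω) [IsProbabilityMeasure P] (V : Ω → ℝ) (hV : Measurable V)
    (I : Set ℝ) (hIopen : IsOpen I) (hIconn : I.OrdConnected)
    (hInt : ∀ θ ∈ I, Integrable (fun ω => Real.exp (θ * V ω)) P)
    (Z : ℝ → ℝ) (hZ : ∀ θ, Z θ = ∫ ω, Real.exp (θ * V ω) ∂P)
    (m : ℝ → Ω → ℝ) (hm : ∀ θ ω, m θ ω = Real.exp (θ * V ω) / Z θ)
    (R : ℝ → ℝ) (hR : ∀ θ, R θ = ∫ ω, m θ ω * Real.log (m θ ω) ∂P) :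
    MonotoneOn R (I ∩ Set.Ici 0) ∧ AntitoneOn R (I ∩ Set.Iic 0) := by
  have hVexp : ∀ θ ∈ I, Integrable (fun ω => V ω * Real.exp (θ * V ω)) P := by
    intro θ hθ
    have hmem : θ ∈ interior (ProbabilityTheory.integrableExpSet V P) :=
      interior_maximal (fun x hx => hInt x hx) hIopen hθ
    simpa using ProbabilityTheory.integrable_pow_mul_exp_of_mem_interior_integrableExpSet hmem 1
  let L : ℝ → ℝ := fun θ => (∫ ω, V ω * Real.exp (θ * V ω) ∂P) / Z θ
  have hRL : ∀ θ ∈ I, R θ = θ * L θ - Real.log (Z θ) := by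
    intro θ hθ
    simp only [hR, hm]
    exact integral_tilted_mul_log P V (hZ θ) (hInt θ hθ) (hVexp θ hθ)
  have htan : ∀ s ∈ I, ∀ t ∈ I, Real.log (Z t) + (s - t) * L t ≤ Real.log (Z s) := by
    intro s hs t ht
    simpa only [L, hZ] using
      log_integral_exp_tangent_le P V (hInt s hs) (hInt t ht) (hVexp t ht)
  have hL : MonotoneOn L I := by
    intro s hs t ht hst
    rcases hst.eq_or_lt with rfl | hlt
    · rfl
    · have h1 := htan s hs t ht
      have h2 := htan t ht s hs
      nlinarith
  constructor
  · rintro s ⟨hs, hs0⟩ t ⟨ht, -⟩ hst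
    rw [hRL s hs, hRL t ht]
    have h1 := htan s hs t ht
    have h2 := mul_le_mul_of_nonneg_left (hL hs ht hst) hs0
    linarith
  · rintro s ⟨hs, -⟩ t ⟨ht, ht0⟩ hst
    rw [hRL s hs, hRL t ht]
    have h1 := htan t ht s hs
    have h2 := mul_le_mul_of_nonpos_left (hL hs ht hst) ht0
    linarith
end

section
/- Let P be a probability measure on a measurable space Ω, let V : Ω → ℝ be measurable, and let I ⊆ ℝ be an open interval such that ω ↦ exp(θ V(ω)) is P-integrable for every θ ∈ I. Define Z(θ) = ∫ exp(θV) dP, m_θ = exp(θV)/Z(θ) and R(θ) = ∫ m_θ ln m_θ dP. Then for every θ ∈ I, R is differentiable at θ with derivative R′(θ) = θ · ( ∫ V² m_θ dP − ( ∫ V m_θ dP )² ), i.e. θ times the variance of V under the tilted measure with density m_θ. -/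
open MeasureTheory

/-!
On `I` the logarithm of the tilted density is `θ V - log Z(θ)`, so the relative entropy is
`R(θ) = θ A(θ) / Z(θ) - log Z(θ)` with `A(θ) = ∫ V exp(θV) dP`; this is the Legendre form
`θ K'(θ) - K(θ)` for the cumulant generating function `K = log Z`. Openness of `I` places it in the
interior of the set of exponential integrability, where `Z' = A` and `A' = ∫ V² exp(θV) dP`
(`ProbabilityTheory.hasDerivAt_mgf`, `ProbabilityTheory.hasDerivAt_integral_pow_mul_exp_real`).
Hence `R'(θ) = θ K''(θ)`, and `K''(θ)` is the variance of `V` under the tilted measure.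
-/

/-- With `P`, `V`, `I`, `Z`, `m_θ` and `R` as in the exponential-tilting
setup, for every `θ ∈ I` the relative entropy `R` is differentiable at `θ` with
`R′(θ) = θ (∫ V² m_θ dP − (∫ V m_θ dP)²)`, i.e. `θ` times the variance of `V` under
the tilted measure. -/
theorem hasDerivAt_relativeEntropy_tilted {Ω : Type*} [MeasurableSpace Ω]
    (P : Measure Ω) [IsProbabilityMeasure P] (V : Ω → ℝ) (hV : Measurable V)
    (I : Set ℝ) (hIopen : IsOpen I) (hIconn : I.OrdConnected)
    (hInt : ∀ θ ∈ I, Integrable (fun ω => Real.exp (θ * V ω)) P)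
    (Z : ℝ → ℝ) (hZ : ∀ θ, Z θ = ∫ ω, Real.exp (θ * V ω) ∂P)
    (m : ℝ → Ω → ℝ) (hm : ∀ θ ω, m θ ω = Real.exp (θ * V ω) / Z θ)
    (R : ℝ → ℝ) (hR : ∀ θ, R θ = ∫ ω, m θ ω * Real.log (m θ ω) ∂P) :
    ∀ θ ∈ I, HasDerivAt R
      (θ * ((∫ ω, (V ω) ^ 2 * m θ ω ∂P) - (∫ ω, V ω * m θ ω ∂P) ^ 2)) θ := by
  have hsub : ∀ t ∈ I, t ∈ interior (ProbabilityTheory.integrableExpSet V P) := fun t ht =>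
    interior_maximal (fun s hs => hInt s hs) hIopen ht
  have hZpos : ∀ t ∈ I, 0 < Z t := fun t ht => by
    rw [hZ t]
    exact integral_exp_pos (hInt t ht)
  have hint1 : ∀ t ∈ I, Integrable (fun ω => V ω * Real.exp (t * V ω)) P := fun t ht => by
    simpa using
      ProbabilityTheory.integrable_pow_mul_exp_of_mem_interior_integrableExpSet (hsub t ht) 1
  have hRlegendre : ∀ t ∈ I,
      R t = t * ((∫ ω, V ω * Real.exp (t * V ω) ∂P) / Z t) - Real.log (Z t) := by
    intro t ht
    have hne := (hZpos t ht).ne'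
    have hpt : ∀ ω, m t ω * Real.log (m t ω)
        = t / Z t * (V ω * Real.exp (t * V ω))
          - Real.log (Z t) / Z t * Real.exp (t * V ω) := by
      intro ω
      rw [hm, Real.log_div (Real.exp_pos _).ne' hne, Real.log_exp]
      ring
    simp_rw [hR t, hpt]
    rw [integral_sub ((hint1 t ht).const_mul _) ((hInt t ht).const_mul _),
      integral_const_mul, integral_const_mul, ← hZ t]
    field_simp
  intro θ hθ
  have hne := (hZpos θ hθ).ne'
  have hdZ : HasDerivAt Z (∫ ω, V ω * Real.exp (θ * V ω) ∂P) θ := by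
    have h := ProbabilityTheory.hasDerivAt_mgf (hsub θ hθ)
    rwa [show ProbabilityTheory.mgf V P = Z from funext fun t => (hZ t).symm] at h
  have hdA : HasDerivAt (fun t => ∫ ω, V ω * Real.exp (t * V ω) ∂P)
      (∫ ω, V ω ^ 2 * Real.exp (θ * V ω) ∂P) θ := by
    simpa using ProbabilityTheory.hasDerivAt_integral_pow_mul_exp_real (hsub θ hθ) 1
  have hd := (((hasDerivAt_id' θ).fun_mul (hdA.fun_div hdZ hne)).fun_sub
    (hdZ.log hne)).congr_of_eventuallyEq
      (Filter.eventually_of_mem (hIopen.mem_nhds hθ) hRlegendre)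
  have hmoment : ∀ f : Ω → ℝ,
      ∫ ω, f ω * m θ ω ∂P = (∫ ω, f ω * Real.exp (θ * V ω) ∂P) / Z θ := fun f => by
    simp_rw [hm, ← mul_div_assoc]
    exact integral_div _ _
  rw [hmoment, hmoment]
  refine hd.congr_deriv ?_
  -- The integrals are made atoms so that `field_simp` does not rewrite under the integral sign.
  generalize (∫ ω, V ω * Real.exp (θ * V ω) ∂P) = A
  generalize (∫ ω, V ω ^ 2 * Real.exp (θ * V ω) ∂P) = B
  field_simp
  ring
end

section
/- Let Σ be an n×n real symmetric positive definite matrix, μ ∈ ℝⁿ, γ > 0 and θ > 0. Then the function a ↦ −(1/(2θ)) ln(1 − θγ aᵀΣa) − ⟨a, μ⟩ + θ aᵀΣa / (2(1 − θγ aᵀΣa)) is convex on the convex set {a ∈ ℝⁿ : θγ aᵀΣa < 1}. -/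
open Matrix

/-!
With `s(a) = θγ aᵀΣa`, the rational term equals `(1/(2γ)) ((1 - s)⁻¹ - 1)`. So the function is a
nonnegative combination of `-log (1 - s)` and `(1 - s)⁻¹`, plus an affine function. Since `s` is
convex, `1 - s` is concave, and `-log` and `·⁻¹` are convex and decreasing on `(0, ∞)`, so both
compositions are convex where `1 - s > 0`.
-/

/-- The gap in the convexity inequality is `t * u` times the quadratic form at `x - y`. -/
lemma convexOn_quadraticForm {n : ℕ} {A : Matrix (Fin n) (Fin n) ℝ} (hA : A.PosSemidef) :
    ConvexOn ℝ Set.univ (fun a : Fin n → ℝ => a ⬝ᵥ A *ᵥ a) := by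
  refine ⟨convex_univ, fun x _ y _ t u ht hu htu => ?_⟩
  have h : 0 ≤ (x - y) ⬝ᵥ A *ᵥ (x - y) := by
    simpa using hA.dotProduct_mulVec_nonneg (x - y)
  have h2 := mul_nonneg (mul_nonneg ht hu) h
  obtain rfl : u = 1 - t := by linarith
  simp only [mulVec_add, mulVec_sub, mulVec_smul, add_dotProduct, sub_dotProduct, dotProduct_add,
    dotProduct_sub, smul_dotProduct, dotProduct_smul, smul_eq_mul] at h2 ⊢
  linarith

lemma convexOn_neg_log_of_concaveOn {E : Type*} [AddCommGroup E] [Module ℝ E] {s : Set E}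
    {f : E → ℝ} (hf : ConcaveOn ℝ s f) (hpos : ∀ x ∈ s, 0 < f x) :
    ConvexOn ℝ s (fun x => -Real.log (f x)) := by
  refine ⟨hf.1, fun x hx y hy t u ht hu htu => ?_⟩
  have hw : 0 < t • f x + u • f y := (convex_Ioi (0 : ℝ)) (hpos x hx) (hpos y hy) ht hu htu
  have h1 := Real.log_le_log hw (hf.2 hx hy ht hu htu)
  have h2 := strictConcaveOn_log_Ioi.concaveOn.2 (hpos x hx) (hpos y hy) ht hu htu
  simp only [smul_eq_mul] at *
  linarith

lemma convexOn_inv_of_concaveOn {E : Type*} [AddCommGroup E] [Module ℝ E] {s : Set E}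
    {f : E → ℝ} (hf : ConcaveOn ℝ s f) (hpos : ∀ x ∈ s, 0 < f x) :
    ConvexOn ℝ s (fun x => (f x)⁻¹) := by
  refine ⟨hf.1, fun x hx y hy t u ht hu htu => ?_⟩
  have hw : 0 < t • f x + u • f y := (convex_Ioi (0 : ℝ)) (hpos x hx) (hpos y hy) ht hu htu
  have h1 := inv_anti₀ hw (hf.2 hx hy ht hu htu)
  have h2 := (convexOn_zpow (𝕜 := ℝ) (-1)).2 (hpos x hx) (hpos y hy) ht hu htu
  simp only [_root_.zpow_neg_one] at h2
  exact h1.trans h2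

/-- For a positive definite `Σ`, `μ ∈ ℝⁿ`, `γ > 0` and `θ > 0`, the
worst-case mean–variance Lagrangian
`a ↦ −(1/(2θ)) ln(1 − θγ aᵀΣa) − ⟨a,μ⟩ + θ aᵀΣa / (2(1 − θγ aᵀΣa))`
is convex on the convex set `{a : θγ aᵀΣa < 1}`. -/
theorem convexOn_worstCase_lagrangian {n : ℕ} (hn : 1 ≤ n)
    (Sig : Matrix (Fin n) (Fin n) ℝ) (hSig : Sig.PosDef) (μ : Fin n → ℝ)
    (γ θ : ℝ) (hγ : 0 < γ) (hθ : 0 < θ) :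
    ConvexOn ℝ {a : Fin n → ℝ | θ * γ * (a ⬝ᵥ Sig *ᵥ a) < 1}
      (fun a => -(1 / (2 * θ)) * Real.log (1 - θ * γ * (a ⬝ᵥ Sig *ᵥ a)) - a ⬝ᵥ μ
        + θ * (a ⬝ᵥ Sig *ᵥ a) / (2 * (1 - θ * γ * (a ⬝ᵥ Sig *ᵥ a)))) := by
  have hs : ConvexOn ℝ Set.univ (fun a : Fin n → ℝ => θ * γ * (a ⬝ᵥ Sig *ᵥ a)) :=
    (convexOn_quadraticForm hSig.posSemidef).smul (mul_pos hθ hγ).le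
  have hset : Convex ℝ {a : Fin n → ℝ | θ * γ * (a ⬝ᵥ Sig *ᵥ a) < 1} := by
    simpa using hs.convex_lt 1
  have hpos : ∀ a ∈ {a : Fin n → ℝ | θ * γ * (a ⬝ᵥ Sig *ᵥ a) < 1},
      0 < 1 - θ * γ * (a ⬝ᵥ Sig *ᵥ a) := fun a ha => sub_pos.2 ha
  have hu : ConcaveOn ℝ {a : Fin n → ℝ | θ * γ * (a ⬝ᵥ Sig *ᵥ a) < 1}
      (fun a => 1 - θ * γ * (a ⬝ᵥ Sig *ᵥ a)) :=
    (concaveOn_const 1 hset).sub (hs.subset (Set.subset_univ _) hset)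
  have hlin : ConvexOn ℝ {a : Fin n → ℝ | θ * γ * (a ⬝ᵥ Sig *ᵥ a) < 1}
      (fun a => -(a ⬝ᵥ μ) - 1 / (2 * γ)) := by
    refine ⟨hset, fun x _ y _ t u _ _ htu => le_of_eq ?_⟩
    obtain rfl : u = 1 - t := by linarith
    simp only [add_dotProduct, smul_dotProduct, smul_eq_mul]
    ring
  have hlog := (convexOn_neg_log_of_concaveOn hu hpos).smul
    (show 0 ≤ 1 / (2 * θ) by positivity)
  have hinv := (convexOn_inv_of_concaveOn hu hpos).smul
    (show 0 ≤ 1 / (2 * γ) by positivity)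
  refine ((hlog.add hlin).add hinv).congr fun a ha => ?_
  have hne := (hpos a ha).ne'
  simp only [Pi.add_apply, smul_eq_mul]
  have key : θ * (a ⬝ᵥ Sig *ᵥ a) / (2 * (1 - θ * γ * (a ⬝ᵥ Sig *ᵥ a)))
      = 1 / (2 * γ) * (1 - θ * γ * (a ⬝ᵥ Sig *ᵥ a))⁻¹ - 1 / (2 * γ) := by
    generalize a ⬝ᵥ Sig *ᵥ a = q at hne ⊢
    obtain ⟨v, hv⟩ : ∃ v, v = 1 - θ * γ * q := ⟨_, rfl⟩
    rw [← hv] at hne ⊢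
    field_simp
    linarith
  rw [key]
  ring
end

section
/- Let a ∈ ℝⁿ, γ > 0 and θ > 0 with θγ aᵀΣa < 1, set S = aᵀΣa, Σ̃ = (Σ⁻¹ − θγ a aᵀ)⁻¹ and μ̃ = μ − θ Σ̃ a. Then the Kullback–Leibler divergence of the multivariate Gaussian N(μ̃, Σ̃) from N(μ, Σ) equals (θ/2) · S · Γ(S; θ, γ) + (1/2) ln(1 − θγ S), where Γ(S; θ, γ) = (γ(1 − θγS) + θ)/(1 − θγS)². -/
open Matrix MeasureTheory

/-- The Kullback–Leibler divergence of `N(μt, Sigt)` from `N(μ, Sig)`, written as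
`∫ m ln m dN(μ,Sig)` with `m` the density ratio. -/
noncomputable def klGaussian {n : ℕ} (μt : Fin n → ℝ) (Sigt : Matrix (Fin n) (Fin n) ℝ)
    (μ : Fin n → ℝ) (Sig : Matrix (Fin n) (Fin n) ℝ) : ℝ :=
  ∫ x, (gaussianPdf μt Sigt x / gaussianPdf μ Sig x) *
    Real.log (gaussianPdf μt Sigt x / gaussianPdf μ Sig x) ∂(gaussianMeasure μ Sig)

/-!
The divergence is an expectation under `N(μ̃, Σ̃)`: cancelling one density against the reference
measure gives `∫ p̃ log (p̃ / p)` with respect to Lebesgue measure (`klGaussian_eq_integral`).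
Because `Σ⁻¹ = Σ̃⁻¹ + θγ a aᵀ` and `μ = μ̃ + θ Σ̃ a`, the full quadratic forms in `log (p̃ / p)`
cancel, leaving a quadratic polynomial in the single variable `t = a ⬝ᵥ (x - μ̃)`. Only the first
two moments of `t` under `N(μ̃, Σ̃)` are then needed: mean `0` and variance `v = aᵀ Σ̃ a`
(`integral_gaussianPdf_mul_quadratic`), so no trace has to be computed. They follow by writing
`Σ̃ = L Lᵀ` and changing variables `x = μ̃ + L z` with `z` standard Gaussian
(`integral_gaussianPdf_mul`).

The remaining input is linear algebra. By the Sherman–Morrison formula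
`Σ̃ = Σ + k (Σ a) (Σ a)ᵀ` with `k = θγ / (1 - θγS) > 0`. Hence `Σ̃` is positive definite,
`det Σ / det Σ̃ = 1 - θγS` by the matrix determinant lemma, and `v = S / (1 - θγS)`.
-/

open ProbabilityTheory in
/-- The standard Gaussian product measure has the product density. -/
lemma pi_gaussianReal_eq_withDensity (n : ℕ) :
    Measure.pi (fun _ : Fin n => gaussianReal 0 1) =
      volume.withDensity fun z => ENNReal.ofReal (∏ i, gaussianPDFReal 0 1 (z i)) := by
  refine Measure.pi_eq fun s hs => ?_
  rw [withDensity_apply _ (MeasurableSet.univ_pi hs), volume_pi, Measure.restrict_pi_pi,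
    ← ofReal_integral_eq_lintegral_ofReal]
  · rw [integral_fintype_prod_eq_prod (fun _ : Fin n => gaussianPDFReal 0 1),
      ENNReal.ofReal_prod_of_nonneg]
    · simp_rw [gaussianReal_apply_eq_integral 0 one_ne_zero]
    · exact fun i _ => integral_nonneg fun x => gaussianPDFReal_nonneg _ _ _
  · exact Integrable.fintype_prod fun i => (integrable_gaussianPDFReal 0 1).restrict
  · exact ae_of_all _ fun z => Finset.prod_nonneg fun i _ => gaussianPDFReal_nonneg _ _ _

lemma exists_mul_transpose_of_posDef {n : ℕ} {Sig : Matrix (Fin n) (Fin n) ℝ}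
    (h : Sig.PosDef) : ∃ L : Matrix (Fin n) (Fin n) ℝ, IsUnit L.det ∧ Sig = L * Lᵀ := by
  obtain ⟨B, hB⟩ : ∃ B : Matrix (Fin n) (Fin n) ℝ, Sig = Bᵀ * B := by
    open scoped MatrixOrder Matrix.Norms.L2Operator in
    obtain ⟨B, hB⟩ := CStarAlgebra.nonneg_iff_eq_star_mul_self.mp h.posSemidef.nonneg
    exact ⟨B, by simpa [star_eq_conjTranspose] using hB⟩
  refine ⟨Bᵀ, ?_, by simpa using hB⟩
  have := h.det_pos.ne'
  rw [hB, det_mul] at this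
  exact (left_ne_zero_of_mul this).isUnit

open ProbabilityTheory in
/-- At `x = μ + L z`, the density of `N(μ, L Lᵀ)` times the Jacobian `|det L|` is the standard
Gaussian density at `z`. -/
lemma abs_det_mul_gaussianPdf {n : ℕ} (μ : Fin n → ℝ) {L : Matrix (Fin n) (Fin n) ℝ}
    (hL : IsUnit L.det) (z : Fin n → ℝ) :
    |L.det| * gaussianPdf μ (L * Lᵀ) (μ + L *ᵥ z) = ∏ i, gaussianPDFReal 0 1 (z i) := by
  have hq : (L *ᵥ z) ⬝ᵥ (L * Lᵀ)⁻¹ *ᵥ (L *ᵥ z) = ∑ i, z i ^ 2 := by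
    have hLt : IsUnit Lᵀ.det := by rwa [det_transpose]
    rw [Matrix.mul_inv_rev, mulVec_mulVec, Matrix.mul_assoc, nonsing_inv_mul _ hL,
      Matrix.mul_one, dotProduct_mulVec, ← transpose_nonsing_inv, vecMul_transpose,
      mulVec_mulVec, nonsing_inv_mul _ hL, one_mulVec]
    simp [dotProduct, sq]
  have hd : |L.det| ≠ 0 := abs_ne_zero.mpr hL.ne_zero
  have hs : √((2 * Real.pi) ^ n * (L * Lᵀ).det) = √(2 * Real.pi) ^ n * |L.det| := by
    rw [det_mul, det_transpose, Real.sqrt_mul (by positivity), Real.sqrt_mul_self_eq_abs]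
    congr 1
    rw [Real.sqrt_eq_iff_mul_self_eq (by positivity) (by positivity), ← mul_pow,
      Real.mul_self_sqrt (by positivity)]
  have hp : √(2 * Real.pi) ^ n ≠ 0 := by positivity
  simp only [gaussianPdf, gaussianPDFReal, add_sub_cancel_left, hq, hs]
  rw [Finset.prod_mul_distrib, ← Real.exp_sum]
  simp only [NNReal.coe_one, mul_one, sub_zero, Finset.prod_const, Finset.card_univ,
    Fintype.card_fin, ← Finset.sum_div, Finset.sum_neg_distrib, inv_pow]
  rw [show -(1 / 2) * ∑ i, z i ^ 2 = -(∑ i, z i ^ 2) / 2 by ring]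
  field_simp

open ProbabilityTheory in
/-- The Gaussian `N(μ, L Lᵀ)` is the law of `μ + L z` for a standard Gaussian vector `z`. No
integrability of `f` is needed: a change of variables preserves the junk value `0`. -/
lemma integral_gaussianPdf_mul {n : ℕ} (μ : Fin n → ℝ) {L : Matrix (Fin n) (Fin n) ℝ}
    (hL : IsUnit L.det) (f : (Fin n → ℝ) → ℝ) :
    ∫ x, gaussianPdf μ (L * Lᵀ) x * f x =
      ∫ z, f (μ + L *ᵥ z) ∂Measure.pi (fun _ : Fin n => gaussianReal 0 1) := by
  have hinj : Function.Injective fun z => μ + L *ᵥ z :=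
    (add_right_injective μ).comp
      (mulVec_injective_of_isUnit ((isUnit_iff_isUnit_det L).mpr hL))
  have hsurj : Function.Surjective fun z => μ + L *ᵥ z := fun x =>
    ⟨L⁻¹ *ᵥ (x - μ), by simp [mulVec_mulVec, mul_nonsing_inv _ hL]⟩
  have hder (z : Fin n → ℝ) : HasFDerivWithinAt (fun z => μ + L *ᵥ z)
      (LinearMap.toContinuousLinearMap (toLin' L)) Set.univ z := by
    exact ((LinearMap.toContinuousLinearMap (toLin' L)).hasFDerivAt.const_add μ).hasFDerivWithinAt
  have hcv := integral_image_eq_integral_abs_det_fderiv_smul volume MeasurableSet.univ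
    (fun z _ => hder z) hinj.injOn (fun x => gaussianPdf μ (L * Lᵀ) x * f x)
  rw [Set.image_univ, hsurj.range_eq, setIntegral_univ, setIntegral_univ] at hcv
  rw [hcv, pi_gaussianReal_eq_withDensity, integral_withDensity_eq_integral_toReal_smul]
  · refine integral_congr_ae (ae_of_all _ fun z => ?_)
    simp only [smul_eq_mul]
    rw [ENNReal.toReal_ofReal (Finset.prod_nonneg fun i _ => gaussianPDFReal_nonneg _ _ _),
      ← abs_det_mul_gaussianPdf μ hL z]
    simp [ContinuousLinearMap.det, mul_assoc]
  · have := measurable_gaussianPDFReal 0 1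
    fun_prop
  · exact ae_of_all _ fun z => ENNReal.ofReal_lt_top

open ProbabilityTheory in
lemma memLp_dotProduct_pi_gaussianReal {n : ℕ} (w : Fin n → ℝ) :
    MemLp (fun z => w ⬝ᵥ z) 2 (Measure.pi (fun _ : Fin n => gaussianReal 0 1)) := by
  refine memLp_finsetSum _ fun i _ => MemLp.const_mul ?_ _
  exact (memLp_id_gaussianReal 2).comp_measurePreserving (measurePreserving_eval _ i)

open ProbabilityTheory in
lemma integral_dotProduct_pi_gaussianReal {n : ℕ} (w : Fin n → ℝ) :
    ∫ z, w ⬝ᵥ z ∂Measure.pi (fun _ : Fin n => gaussianReal 0 1) = 0 := by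
  simp only [dotProduct]
  rw [integral_finsetSum]
  · simp [integral_const_mul, integral_eval]
  · exact fun i _ => (integrable_eval IsGaussian.integrable_id).const_mul _

open ProbabilityTheory in
lemma integral_dotProduct_sq_pi_gaussianReal {n : ℕ} (w : Fin n → ℝ) :
    ∫ z, (w ⬝ᵥ z) ^ 2 ∂Measure.pi (fun _ : Fin n => gaussianReal 0 1) = w ⬝ᵥ w := by
  rw [← variance_of_integral_eq_zero (memLp_dotProduct_pi_gaussianReal w).aemeasurable
    (integral_dotProduct_pi_gaussianReal w)]
  have : (fun z : Fin n → ℝ => w ⬝ᵥ z) = ∑ i, fun z : Fin n → ℝ => w i * z i := by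
    ext z; simp [dotProduct]
  rw [this, variance_sum_pi (X := fun i x => w i * x)]
  · refine Finset.sum_congr rfl fun i _ => ?_
    rw [variance_const_mul, variance_fun_id_gaussianReal, NNReal.coe_one, mul_one, sq]
  · exact fun i => IsGaussian.memLp_two_id.const_mul _

open ProbabilityTheory in
/-- Under `N(μ, Sig)` the variable `a ⬝ᵥ (x - μ)` has mean `0` and variance `aᵀ Sig a`, so a
quadratic polynomial in it has the expected integral. -/
lemma integral_gaussianPdf_mul_quadratic {n : ℕ} (μ : Fin n → ℝ)
    {Sig : Matrix (Fin n) (Fin n) ℝ} (h : Sig.PosDef) (a : Fin n → ℝ) (p q r : ℝ) :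
    ∫ x, gaussianPdf μ Sig x * (p + q * (a ⬝ᵥ (x - μ)) + r * (a ⬝ᵥ (x - μ)) ^ 2) =
      p + r * (a ⬝ᵥ Sig *ᵥ a) := by
  obtain ⟨L, hL, rfl⟩ := exists_mul_transpose_of_posDef h
  have hm := memLp_dotProduct_pi_gaussianReal (a ᵥ* L)
  have h1 : Integrable (fun z => p + q * (a ᵥ* L ⬝ᵥ z))
      (Measure.pi (fun _ : Fin n => gaussianReal 0 1)) :=
    (integrable_const p).add ((hm.integrable one_le_two).const_mul q)
  have h2 := hm.integrable_sq.const_mul r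
  rw [integral_gaussianPdf_mul μ hL]
  simp only [add_sub_cancel_left, dotProduct_mulVec a L]
  rw [integral_add h1 h2,
    integral_add (integrable_const p) ((hm.integrable one_le_two).const_mul q),
    integral_const_mul, integral_const_mul, integral_dotProduct_pi_gaussianReal,
    integral_dotProduct_sq_pi_gaussianReal]
  simp [← mulVec_mulVec, dotProduct_mulVec, mulVec_transpose]

lemma gaussianPdf_pos {n : ℕ} (μ : Fin n → ℝ) {Sig : Matrix (Fin n) (Fin n) ℝ}
    (h : Sig.PosDef) (x : Fin n → ℝ) : 0 < gaussianPdf μ Sig x := by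
  have := h.det_pos
  unfold gaussianPdf
  positivity

lemma klGaussian_eq_integral {n : ℕ} (μt μ : Fin n → ℝ) (Sigt : Matrix (Fin n) (Fin n) ℝ)
    {Sig : Matrix (Fin n) (Fin n) ℝ} (h : Sig.PosDef) :
    klGaussian μt Sigt μ Sig =
      ∫ x, gaussianPdf μt Sigt x * Real.log (gaussianPdf μt Sigt x / gaussianPdf μ Sig x) := by
  rw [klGaussian, gaussianMeasure, integral_withDensity_eq_integral_toReal_smul]
  · refine integral_congr_ae (ae_of_all _ fun x => ?_)
    have hp := gaussianPdf_pos μ h x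
    simp only [smul_eq_mul]
    rw [ENNReal.toReal_ofReal hp.le, ← mul_assoc, mul_div_cancel₀ _ hp.ne']
  · exact (continuous_gaussianPdf μ Sig).measurable.ennreal_ofReal
  · exact ae_of_all _ fun x => ENNReal.ofReal_lt_top

lemma log_gaussianPdf_div {n : ℕ} (μt μ : Fin n → ℝ) {Sigt Sig : Matrix (Fin n) (Fin n) ℝ}
    (ht : Sigt.PosDef) (h : Sig.PosDef) (x : Fin n → ℝ) :
    Real.log (gaussianPdf μt Sigt x / gaussianPdf μ Sig x) =
      1 / 2 * Real.log (Sig.det / Sigt.det) +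
        1 / 2 * ((x - μ) ⬝ᵥ Sig⁻¹ *ᵥ (x - μ)) - 1 / 2 * ((x - μt) ⬝ᵥ Sigt⁻¹ *ᵥ (x - μt)) := by
  have hd := h.det_pos
  have hdt := ht.det_pos
  have hpi : (0 : ℝ) < (2 * Real.pi) ^ n := by positivity
  rw [Real.log_div (gaussianPdf_pos _ ht x).ne' (gaussianPdf_pos _ h x).ne']
  unfold gaussianPdf
  rw [Real.log_div (Real.exp_ne_zero _) (by positivity),
    Real.log_div (Real.exp_ne_zero _) (by positivity), Real.log_exp, Real.log_exp,
    Real.log_sqrt (by positivity), Real.log_sqrt (by positivity),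
    Real.log_mul hpi.ne' hd.ne', Real.log_mul hpi.ne' hdt.ne', Real.log_div hd.ne' hdt.ne']
  ring

/-- The Sherman–Morrison formula for `Sig⁻¹ - c a aᵀ`. -/
lemma inv_sub_smul_vecMulVec {n : ℕ} {Sig : Matrix (Fin n) (Fin n) ℝ} (h : Sig.PosDef)
    (a : Fin n → ℝ) (c : ℝ) (hc : 1 - c * (a ⬝ᵥ Sig *ᵥ a) ≠ 0) :
    (Sig⁻¹ - c • vecMulVec a a)⁻¹ =
      Sig + (c / (1 - c * (a ⬝ᵥ Sig *ᵥ a))) • vecMulVec (Sig *ᵥ a) (Sig *ᵥ a) := by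
  have hu : IsUnit Sig.det := h.det_pos.ne'.isUnit
  have hsymm : a ᵥ* Sig = Sig *ᵥ a := by
    conv_lhs => rw [← h.isHermitian.eq, conjTranspose_eq_transpose_of_trivial, vecMul_transpose]
  refine inv_eq_right_inv ?_
  rw [Matrix.sub_mul, Matrix.mul_add, Matrix.mul_add, nonsing_inv_mul _ hu, Matrix.mul_smul,
    mul_vecMulVec, mulVec_mulVec, nonsing_inv_mul _ hu, one_mulVec, Matrix.smul_mul,
    Matrix.smul_mul, vecMulVec_mul, hsymm, Matrix.mul_smul, vecMulVec_mul_vecMulVec]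
  ext i j
  simp only [Matrix.add_apply, Matrix.sub_apply, Matrix.smul_apply, vecMulVec_apply, smul_eq_mul,
    Pi.smul_apply]
  field_simp
  ring

/-- For `θ > 0` with `θγ aᵀΣa < 1`, `S = aᵀΣa`,
`Σ̃ = (Σ⁻¹ − θγ a aᵀ)⁻¹` and `μ̃ = μ − θ Σ̃ a`, the KL divergence of `N(μ̃,Σ̃)` from
`N(μ,Σ)` equals `(θ/2) S Γ(S;θ,γ) + (1/2) ln(1 − θγS)` with
`Γ(S;θ,γ) = (γ(1−θγS)+θ)/(1−θγS)²`. -/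
theorem klGaussian_worstCase_meanVariance {n : ℕ} (hn : 1 ≤ n)
    (μ : Fin n → ℝ) (Sig : Matrix (Fin n) (Fin n) ℝ) (hSig : Sig.PosDef)
    (a : Fin n → ℝ) (γ θ : ℝ) (hγ : 0 < γ) (hθ : 0 < θ)
    (S : ℝ) (hS : S = a ⬝ᵥ Sig *ᵥ a) (hθS : θ * γ * S < 1)
    (Sigt : Matrix (Fin n) (Fin n) ℝ) (hSigt : Sigt = (Sig⁻¹ - (θ * γ) • vecMulVec a a)⁻¹)
    (μt : Fin n → ℝ) (hμt : μt = μ - θ • (Sigt *ᵥ a)) :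
    klGaussian μt Sigt μ Sig
      = θ / 2 * S * ((γ * (1 - θ * γ * S) + θ) / (1 - θ * γ * S) ^ 2)
        + 1 / 2 * Real.log (1 - θ * γ * S) := by
  have hc : 0 < 1 - θ * γ * S := by linarith
  have hθγ : 0 < θ * γ := mul_pos hθ hγ
  set k : ℝ := θ * γ / (1 - θ * γ * S) with hk
  have hform : Sigt = Sig + k • vecMulVec (Sig *ᵥ a) (Sig *ᵥ a) := by
    rw [hSigt, inv_sub_smul_vecMulVec hSig a _ (by rw [← hS]; exact hc.ne'), ← hS]
  have hposdef : Sigt.PosDef := by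
    rw [hform]
    refine hSig.add_posSemidef (PosSemidef.smul ?_ (by positivity))
    simpa using posSemidef_vecMulVec_self_star (Sig *ᵥ a)
  have hut : IsUnit Sigt.det := hposdef.det_pos.ne'.isUnit
  have hdet : Sig.det / Sigt.det = 1 - θ * γ * S := by
    have : Sigt.det = Sig.det * (1 + k * S) := by
      have hfac : Sigt = Sig * (1 + vecMulVec (k • a) (Sig *ᵥ a)) := by
        rw [hform, Matrix.mul_add, Matrix.mul_one, mul_vecMulVec, mulVec_smul,
          smul_vecMulVec]
      rw [hfac, det_mul, vecMulVec_eq (Fin 1), det_one_add_replicateCol_mul_replicateRow,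
        dotProduct_smul, dotProduct_comm, ← hS, smul_eq_mul]
    have hd := hSig.det_pos
    have hk1 : 1 + k * S = 1 / (1 - θ * γ * S) := by rw [hk]; field_simp; ring
    rw [this, hk1]
    field_simp
  have hSigta : Sigt *ᵥ a = (1 / (1 - θ * γ * S)) • (Sig *ᵥ a) := by
    rw [hform, add_mulVec, smul_mulVec, vecMulVec_mulVec, dotProduct_comm, ← hS]
    ext i
    simp only [Pi.add_apply, Pi.smul_apply, smul_eq_mul, MulOpposite.smul_eq_mul_unop,
      MulOpposite.unop_op]
    rw [hk]
    field_simp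
    ring
  have hv : a ⬝ᵥ Sigt *ᵥ a = S / (1 - θ * γ * S) := by
    rw [hSigta, dotProduct_smul, ← hS, smul_eq_mul]
    ring
  have hinv : Sig⁻¹ = Sigt⁻¹ + (θ * γ) • vecMulVec a a := by
    have hPdet : IsUnit (Sig⁻¹ - (θ * γ) • vecMulVec a a).det := by
      rw [hSigt] at hut
      exact (isUnit_nonsing_inv_det_iff).mp hut
    rw [hSigt, nonsing_inv_nonsing_inv _ hPdet]
    abel
  -- The quadratic form of `Σ` at `x - μ` is that of `Σ̃` at `x - μ̃` plus a polynomial in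
  -- `a ⬝ᵥ (x - μ̃)`, so that the two quadratic forms cancel in the log-likelihood ratio.
  have hquad (x : Fin n → ℝ) : (x - μ) ⬝ᵥ Sig⁻¹ *ᵥ (x - μ) =
      (x - μt) ⬝ᵥ Sigt⁻¹ *ᵥ (x - μt) - 2 * θ * (a ⬝ᵥ (x - μt)) + θ ^ 2 * (a ⬝ᵥ Sigt *ᵥ a)
        + θ * γ * (a ⬝ᵥ (x - μt) - θ * (a ⬝ᵥ Sigt *ᵥ a)) ^ 2 := by
    have hx : x - μ = (x - μt) - θ • (Sigt *ᵥ a) := by rw [hμt]; abel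
    have hst : Sigtᵀ = Sigt := by
      simpa [conjTranspose_eq_transpose_of_trivial] using hposdef.isHermitian.eq
    have h1 : Sigt⁻¹ *ᵥ (Sigt *ᵥ a) = a := by
      rw [mulVec_mulVec, nonsing_inv_mul _ hut, one_mulVec]
    have h2 (y : Fin n → ℝ) : (Sigt *ᵥ a) ⬝ᵥ Sigt⁻¹ *ᵥ y = a ⬝ᵥ y := by
      rw [← hst, mulVec_transpose, ← dotProduct_mulVec, hst, mulVec_mulVec,
        mul_nonsing_inv _ hut, one_mulVec]
    rw [hx]
    generalize x - μt = y
    rw [hinv, add_mulVec, dotProduct_add, smul_mulVec, vecMulVec_mulVec, mulVec_sub, mulVec_smul,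
      h1]
    simp only [sub_dotProduct, dotProduct_sub, smul_dotProduct, dotProduct_smul, smul_eq_mul, h2,
      MulOpposite.smul_eq_mul_unop, MulOpposite.unop_op, dotProduct_comm y a,
      dotProduct_comm (Sigt *ᵥ a) a]
    ring
  rw [klGaussian_eq_integral _ _ _ hSig]
  simp_rw [log_gaussianPdf_div μt μ hposdef hSig, hquad, hdet]
  set v := a ⬝ᵥ Sigt *ᵥ a with hvdef
  set l := Real.log (1 - θ * γ * S)
  rw [show (fun x => gaussianPdf μt Sigt x * (1 / 2 * l + 1 / 2 * ((x - μt) ⬝ᵥ Sigt⁻¹ *ᵥ (x - μt)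
        - 2 * θ * (a ⬝ᵥ (x - μt)) + θ ^ 2 * v + θ * γ * (a ⬝ᵥ (x - μt) - θ * v) ^ 2)
        - 1 / 2 * ((x - μt) ⬝ᵥ Sigt⁻¹ *ᵥ (x - μt)))) =
      fun x => gaussianPdf μt Sigt x * ((1 / 2 * l + θ ^ 2 * v / 2 + θ ^ 3 * γ * v ^ 2 / 2)
        + (-θ - θ ^ 2 * γ * v) * (a ⬝ᵥ (x - μt)) + θ * γ / 2 * (a ⬝ᵥ (x - μt)) ^ 2) by
    ext x; ring, integral_gaussianPdf_mul_quadratic μt hposdef, ← hvdef, hv]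
  -- The order of the factors is the one in which `field_simp` normalizes the denominator.
  have hne : 1 - θ * S * γ ≠ 0 := by rw [mul_right_comm]; exact hc.ne'
  field_simp
  ring
end

section
/- Let S > 0, γ > 0, η > 0, c ∈ ℝ, and consider the function L(θ) = −(1/(2θ)) ln(1 − θγ S) + c + θ S / (2(1 − θγ S)) + η/θ on the interval (0, 1/(γS)). Then L attains a unique minimum at some interior point θ̃ ∈ (0, 1/(γS)); moreover L is strictly decreasing on (0, θ̃) and strictly increasing on (θ̃, 1/(γS)). -/
/-!
Write `k = γS`. On `(0, 1/k)` the derivative satisfies `L'(θ) = g(θ) / θ²` with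
`g(θ) = ½ ln(1 - kθ) + kθ / (2(1 - kθ)) + Sθ² / (2(1 - kθ)²) - η`.
The function `g` is strictly increasing on `[0, 1/k)`, because
`g'(θ) = k²θ / (2(1 - kθ)²) + Sθ / (1 - kθ)³`. Moreover `g(0) = -η < 0`, and since
`ln u ≥ 1 - 1/u`, one has `g(θ) ≥ (S/2)(θ / (1 - kθ))² - η`, which is positive near `1/k`.
So `g`, and with it `L'`, changes sign exactly once, from negative to positive.
-/

open Set

/-- The rescaled derivative `θ² L'(θ)` of the Lagrangian, with `k = γS`. -/
noncomputable def scaledDeriv (S k η θ : ℝ) : ℝ :=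
  Real.log (1 - k * θ) / 2 + k * θ / (2 * (1 - k * θ)) + S * θ ^ 2 / (2 * (1 - k * θ) ^ 2) - η

lemma hasDerivAt_scaledDeriv (S k η θ : ℝ) (hu : 0 < 1 - k * θ) :
    HasDerivAt (scaledDeriv S k η)
      (k ^ 2 * θ / (2 * (1 - k * θ) ^ 2) + S * θ / (1 - k * θ) ^ 3) θ := by
  have h1 : HasDerivAt (fun x : ℝ => k * x) k θ := by
    simpa using (hasDerivAt_id θ).const_mul k
  have h2 : HasDerivAt (fun x : ℝ => 1 - k * x) (-k) θ := h1.const_sub 1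
  have h3 : HasDerivAt (fun x : ℝ => S * x ^ 2) (S * (2 * θ)) θ := by
    simpa using ((hasDerivAt_id θ).pow 2).const_mul S
  have h4 := ((((h2.log hu.ne').div_const 2).add
    (h1.div (h2.const_mul 2) (by positivity))).add
    (h3.div ((h2.pow 2).const_mul 2) (by simp only [Pi.pow_apply]; positivity))).sub_const η
  refine h4.congr_deriv ?_
  simp only [Pi.pow_apply]
  have := hu.ne'
  field_simp
  ring

lemma one_sub_pos_of_lt {k θ : ℝ} (hk : 0 < k) (h : θ < 1 / k) : 0 < 1 - k * θ := by
  rw [lt_div_iff₀ hk] at h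
  linarith

lemma strictMonoOn_scaledDeriv {S k : ℝ} (η : ℝ) (hS : 0 < S) (hk : 0 < k) :
    StrictMonoOn (scaledDeriv S k η) (Ico 0 (1 / k)) := by
  refine strictMonoOn_of_deriv_pos (convex_Ico _ _) (fun x hx => ?_) (fun x hx => ?_)
  · exact (hasDerivAt_scaledDeriv S k η x
      (one_sub_pos_of_lt hk hx.2)).continuousAt.continuousWithinAt
  · rw [interior_Ico] at hx
    have hu := one_sub_pos_of_lt hk hx.2
    have h0 := hx.1
    rw [(hasDerivAt_scaledDeriv S k η x hu).deriv]
    positivity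

lemma exists_scaledDeriv_pos {S k η : ℝ} (hS : 0 < S) (hk : 0 < k) (hη : 0 < η) :
    ∃ θ ∈ Ioo (0 : ℝ) (1 / k), 0 < scaledDeriv S k η θ := by
  -- The point is chosen so that `θ / (1 - kθ) = r`, where `(S / 2) r ^ 2 > η`.
  obtain ⟨r, hr, hSr⟩ : ∃ r : ℝ, 0 < r ∧ η < S * r ^ 2 / 2 := by
    refine ⟨2 * η / S + 1, by positivity, ?_⟩
    have : S * (2 * η / S + 1) ^ 2 / 2 = 2 * η ^ 2 / S + 2 * η + S / 2 := by
      field_simp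
      ring
    have : 0 < 2 * η ^ 2 / S := by positivity
    linarith
  have hd : 0 < 1 + k * r := by positivity
  have hu : 1 - k * (r / (1 + k * r)) = (1 + k * r)⁻¹ := by
    field_simp
    ring
  refine ⟨r / (1 + k * r), ⟨by positivity, ?_⟩, ?_⟩
  · rw [div_lt_div_iff₀ hd hk]
    linarith
  · have hlog := Real.log_le_sub_one_of_pos hd
    have h1 : k * (r / (1 + k * r)) / (2 * (1 + k * r)⁻¹) = k * r / 2 := by
      field_simp
    have h2 : S * (r / (1 + k * r)) ^ 2 / (2 * (1 + k * r)⁻¹ ^ 2) = S * r ^ 2 / 2 := by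
      field_simp
    rw [scaledDeriv, hu, h1, h2, Real.log_inv]
    linarith

lemma exists_scaledDeriv_eq_zero {S k η : ℝ} (hS : 0 < S) (hk : 0 < k) (hη : 0 < η) :
    ∃ θ ∈ Ioo (0 : ℝ) (1 / k), scaledDeriv S k η θ = 0 := by
  obtain ⟨b, hb, hgb⟩ := exists_scaledDeriv_pos hS hk hη
  have hc : ContinuousOn (scaledDeriv S k η) (Icc 0 b) := fun x hx =>
    (hasDerivAt_scaledDeriv S k η x
      (one_sub_pos_of_lt hk (hx.2.trans_lt hb.2))).continuousAt.continuousWithinAt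
  have h0 : scaledDeriv S k η 0 < 0 := by simp [scaledDeriv, hη]
  obtain ⟨θ, hθ, h⟩ := intermediate_value_Ioo hb.1.le hc ⟨h0, hgb⟩
  exact ⟨θ, ⟨hθ.1, hθ.2.trans hb.2⟩, h⟩

lemma hasDerivAt_lagrangian_s8 (S γ η c θ : ℝ) (h0 : 0 < θ) (hu : 0 < 1 - γ * S * θ) :
    HasDerivAt (fun θ : ℝ => -(1 / (2 * θ)) * Real.log (1 - θ * γ * S) + c
        + θ * S / (2 * (1 - θ * γ * S)) + η / θ)
      (scaledDeriv S (γ * S) η θ / θ ^ 2) θ := by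
  have hu' : 1 - θ * γ * S ≠ 0 := by
    rw [show θ * γ * S = γ * S * θ by ring]
    exact hu.ne'
  have h2 : HasDerivAt (fun x : ℝ => 1 - x * γ * S) (-(γ * S)) θ := by
    simpa using (((hasDerivAt_id θ).mul_const γ).mul_const S).const_sub 1
  have h1 : HasDerivAt (fun x : ℝ => 2 * x) 2 θ := by
    simpa using (hasDerivAt_id θ).const_mul (2 : ℝ)
  have h3 : HasDerivAt (fun x : ℝ => x * S) S θ := by
    simpa using (hasDerivAt_id θ).mul_const S
  have h4 := (((((hasDerivAt_const θ (1 : ℝ)).div h1 (by positivity)).neg.mul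
    (h2.log hu')).add_const c).add
    (h3.div (h2.const_mul 2) (mul_ne_zero two_ne_zero hu'))).add
    ((hasDerivAt_const θ η).div (hasDerivAt_id θ) h0.ne')
  refine h4.congr_deriv ?_
  simp only [Pi.neg_apply, Pi.div_apply, id, scaledDeriv]
  rw [show γ * S * θ = θ * γ * S by ring]
  have := h0.ne'
  field_simp
  ring

/-- For `S > 0`, `γ > 0`, `η > 0`, `c ∈ ℝ`, the Lagrangian
`L(θ) = −(1/(2θ)) ln(1 − θγS) + c + θS/(2(1 − θγS)) + η/θ` on `(0, 1/(γS))` attains a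
unique minimum at an interior point `θ̃`; moreover `L` is strictly decreasing on
`(0, θ̃)` and strictly increasing on `(θ̃, 1/(γS))`. -/
theorem lagrangian_unique_interior_min (S γ η c : ℝ) (hS : 0 < S) (hγ : 0 < γ) (hη : 0 < η)
    (L : ℝ → ℝ)
    (hL : ∀ θ, L θ = -(1 / (2 * θ)) * Real.log (1 - θ * γ * S) + c
        + θ * S / (2 * (1 - θ * γ * S)) + η / θ) :
    ∃ θt ∈ Ioo (0 : ℝ) (1 / (γ * S)),
      (∀ θ ∈ Ioo (0 : ℝ) (1 / (γ * S)), θ ≠ θt → L θt < L θ) ∧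
      StrictAntiOn L (Ioc (0 : ℝ) θt) ∧ StrictMonoOn L (Ico θt (1 / (γ * S))) := by
  have hk : 0 < γ * S := mul_pos hγ hS
  obtain ⟨t, ht, hgt⟩ := exists_scaledDeriv_eq_zero hS hk hη
  have hmono := strictMonoOn_scaledDeriv η hS hk
  have hder : ∀ x ∈ Ioo (0 : ℝ) (1 / (γ * S)),
      HasDerivAt L (scaledDeriv S (γ * S) η x / x ^ 2) x := fun x hx => by
    rw [funext hL]
    exact hasDerivAt_lagrangian_s8 S γ η c x hx.1 (one_sub_pos_of_lt hk hx.2)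
  have hanti : StrictAntiOn L (Ioc (0 : ℝ) t) := by
    refine strictAntiOn_of_deriv_neg (convex_Ioc _ _) (fun x hx => ?_) (fun x hx => ?_)
    · exact (hder x ⟨hx.1, hx.2.trans_lt ht.2⟩).continuousAt.continuousWithinAt
    · rw [interior_Ioc] at hx
      have hx' : x < 1 / (γ * S) := hx.2.trans ht.2
      rw [(hder x ⟨hx.1, hx'⟩).deriv]
      have := hmono ⟨hx.1.le, hx'⟩ ⟨ht.1.le, ht.2⟩ hx.2
      exact div_neg_of_neg_of_pos (hgt ▸ this) (pow_pos hx.1 2)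
  have hinc : StrictMonoOn L (Ico t (1 / (γ * S))) := by
    refine strictMonoOn_of_deriv_pos (convex_Ico _ _) (fun x hx => ?_) (fun x hx => ?_)
    · exact (hder x ⟨ht.1.trans_le hx.1, hx.2⟩).continuousAt.continuousWithinAt
    · rw [interior_Ico] at hx
      have hx' : 0 < x := ht.1.trans hx.1
      rw [(hder x ⟨hx', hx.2⟩).deriv]
      have := hmono ⟨ht.1.le, ht.2⟩ ⟨hx'.le, hx.2⟩ hx.1
      exact div_pos (hgt ▸ this) (pow_pos hx' 2)
  refine ⟨t, ht, fun x hx hne => ?_, hanti, hinc⟩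
  rcases lt_or_gt_of_ne hne with h | h
  · exact hanti ⟨hx.1, h.le⟩ ⟨ht.1, le_rfl⟩ h
  · exact hinc ⟨le_rfl, ht.2⟩ ⟨h.le, hx.2⟩ h
end

section
/- Let S > 0, γ > 0, η > 0, c ∈ ℝ. For every θ ∈ (0, 1/(γS)), the function L(θ) = −(1/(2θ)) ln(1 − θγ S) + c + θ S / (2(1 − θγ S)) + η/θ is differentiable at θ with derivative L′(θ) = (R(θ) − η)/θ², where R(θ) = (θ/2) · S · Γ(S; θ, γ) + (1/2) ln(1 − θγ S) and Γ(S; θ, γ) = (γ(1 − θγS) + θ)/(1 − θγS)². -/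
/-!
Write `D = 1 - θγS`, which is positive exactly because `θ < 1/(γS)`; together with `θ > 0`
this makes every term of `L` differentiable, with `D' = -γS`. The logarithmic term
contributes `ln D / (2θ²) + γS / (2θD)`, the quotient `θS / (2D)` contributes
`S (D + θγS) / (2D²) = S / (2D²)`, and `η / θ` contributes `-η / θ²`. Their sum is
`(R θ - η) / θ²`, since `R θ / θ² = Sγ / (2θD) + S / (2D²) + ln D / (2θ²)`.
-/

open Set

/-- For `S > 0`, `γ > 0`, `η > 0`, `c ∈ ℝ` and every
`θ ∈ (0, 1/(γS))`, the Lagrangian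
`L(θ) = −(1/(2θ)) ln(1 − θγS) + c + θS/(2(1 − θγS)) + η/θ` is differentiable at `θ`
with `L′(θ) = (R(θ) − η)/θ²`, where
`R(θ) = (θ/2) S Γ(S;θ,γ) + (1/2) ln(1 − θγS)` and
`Γ(S;θ,γ) = (γ(1−θγS)+θ)/(1−θγS)²`. -/
theorem hasDerivAt_lagrangian (S γ η c : ℝ) (hS : 0 < S) (hγ : 0 < γ) (hη : 0 < η)
    (L : ℝ → ℝ)
    (hL : ∀ θ, L θ = -(1 / (2 * θ)) * Real.log (1 - θ * γ * S) + c
        + θ * S / (2 * (1 - θ * γ * S)) + η / θ)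
    (R : ℝ → ℝ)
    (hR : ∀ θ, R θ = θ / 2 * S * ((γ * (1 - θ * γ * S) + θ) / (1 - θ * γ * S) ^ 2)
        + 1 / 2 * Real.log (1 - θ * γ * S)) :
    ∀ θ ∈ Ioo (0 : ℝ) (1 / (γ * S)), HasDerivAt L ((R θ - η) / θ ^ 2) θ := by
  rintro θ ⟨hθ, hθ'⟩
  have hD : 0 < 1 - θ * γ * S := by
    have := (lt_div_iff₀ (mul_pos hγ hS)).1 hθ'
    linarith
  have hθ0 : θ ≠ 0 := hθ.ne'
  have hD0 : 1 - θ * γ * S ≠ 0 := hD.ne'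
  have dD : HasDerivAt (fun t : ℝ => 1 - t * γ * S) (-(γ * S)) θ := by
    have h := (((hasDerivAt_id θ).mul_const γ).mul_const S).const_sub 1
    simpa using h
  have dinv : HasDerivAt (fun t : ℝ => -(1 / (2 * t))) (1 / (2 * θ ^ 2)) θ := by
    have h := ((hasDerivAt_inv hθ0).const_mul (-(1 / 2) : ℝ))
    refine (h.congr_deriv ?_).congr_of_eventuallyEq (Filter.Eventually.of_forall fun t => ?_)
    · field_simp
    · simp only [one_div, mul_inv]
      ring
  have dlin : HasDerivAt (fun t : ℝ => t * S) S θ := by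
    simpa using (hasDerivAt_id θ).mul_const S
  have dη : HasDerivAt (fun t : ℝ => η / t) (-η / θ ^ 2) θ := by
    simpa [div_eq_mul_inv] using (hasDerivAt_inv hθ0).const_mul η
  have hmain := (((dinv.mul (dD.log hD0)).add_const c).add
    (dlin.div (dD.const_mul 2) (mul_ne_zero two_ne_zero hD0))).add dη
  rw [funext hL, hR]
  refine hmain.congr_deriv ?_
  -- The logarithm enters both sides linearly; abstracting it leaves an identity of
  -- rational functions in `θ`.
  generalize Real.log (1 - θ * γ * S) = ℓ
  field_simp
  ring
end

section
/- Let S > 0, γ > 0 and η > 0. Then there exists a unique θ ∈ (0, 1/(γS)) such that (θ/2) · S · Γ(S; θ, γ) + (1/2) ln(1 − θγ S) = η, where Γ(S; θ, γ) = (γ(1 − θγS) + θ)/(1 − θγS)². Moreover the left-hand side, as a function of θ on [0, 1/(γS)), vanishes at θ = 0, is monotone increasing, and tends to +∞ as θ → 1/(γS) from the left. -/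
/-!
With `v = 1 / (1 - θγS)`, the relation `θγS = 1 - 1/v` turns the entropy into
`R θ = S/2 * (θ v)² + 1/2 * (v - 1 - log v)`. On `[0, 1/(γS))` the quantity `v` increases
strictly from `1` to `+∞`; the first summand is strictly increasing and unbounded, and the second
is nonnegative and nondecreasing because `v - log v` is nondecreasing on `[1, ∞)`. This gives
strict monotonicity and divergence, and the unique solution of `R θ = η` then comes from
the intermediate value theorem and injectivity.
-/

open Set Filter

/-- The function `v - log v` is nondecreasing on `[1, ∞)`. -/
lemma sub_log_le_sub_log {v w : ℝ} (hv : 1 ≤ v) (hvw : v ≤ w) :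
    v - Real.log v ≤ w - Real.log w := by
  have hv0 : 0 < v := by linarith
  have hw0 : 0 < w := by linarith
  have h1 : Real.log (w / v) ≤ w / v - 1 := Real.log_le_sub_one_of_pos (by positivity)
  rw [Real.log_div hw0.ne' hv0.ne'] at h1
  have h2 : w / v - 1 ≤ w - v := by
    rw [div_sub_one hv0.ne']
    exact div_le_self (by linarith) hv
  linarith

/-- For `S > 0`, `γ > 0`, `η > 0`, there is a unique
`θ ∈ (0, 1/(γS))` with `R(θ) = η`, where
`R(θ) = (θ/2) S Γ(S;θ,γ) + (1/2) ln(1 − θγS)` and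
`Γ(S;θ,γ) = (γ(1−θγS)+θ)/(1−θγS)²`. Moreover `R` vanishes at `0`, is monotone
increasing on `[0, 1/(γS))`, and tends to `+∞` as `θ → 1/(γS)⁻`. -/
theorem exists_unique_entropy_radius (S γ η : ℝ) (hS : 0 < S) (hγ : 0 < γ) (hη : 0 < η)
    (R : ℝ → ℝ)
    (hR : ∀ θ, R θ = θ / 2 * S * ((γ * (1 - θ * γ * S) + θ) / (1 - θ * γ * S) ^ 2)
        + 1 / 2 * Real.log (1 - θ * γ * S)) :
    (∃! θ : ℝ, θ ∈ Ioo (0 : ℝ) (1 / (γ * S)) ∧ R θ = η) ∧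
    R 0 = 0 ∧ StrictMonoOn R (Ico (0 : ℝ) (1 / (γ * S))) ∧
    Tendsto R (nhdsWithin (1 / (γ * S)) (Iio (1 / (γ * S)))) atTop := by
  have hc : 0 < γ * S := mul_pos hγ hS
  have hu : ∀ θ, θ < 1 / (γ * S) → 0 < 1 - θ * γ * S := by
    intro θ h
    rw [lt_div_iff₀ hc] at h
    linarith
  have hform : ∀ θ, θ < 1 / (γ * S) → R θ = S / 2 * (θ * (1 - θ * γ * S)⁻¹) ^ 2
      + 1 / 2 * ((1 - θ * γ * S)⁻¹ - 1 - Real.log (1 - θ * γ * S)⁻¹) := by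
    intro θ h
    have hne := (hu θ h).ne'
    rw [hR, Real.log_inv]
    have hinv : 1 / 2 * ((1 - θ * γ * S)⁻¹ - 1) = θ / 2 * S * (γ / (1 - θ * γ * S)) := by
      field_simp
      ring
    have hsplit : (γ * (1 - θ * γ * S) + θ) / (1 - θ * γ * S) ^ 2
        = γ / (1 - θ * γ * S) + θ * ((1 - θ * γ * S)⁻¹) ^ 2 := by
      rw [add_div, sq, mul_div_mul_right _ _ hne, div_eq_mul_inv θ, mul_inv, sq]
    rw [hsplit]
    linear_combination -hinv
  have hv1 : ∀ θ, 0 ≤ θ → θ < 1 / (γ * S) → 1 ≤ (1 - θ * γ * S)⁻¹ := by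
    intro θ h0 h
    refine (one_le_inv₀ (hu θ h)).2 ?_
    have : 0 ≤ θ * γ * S := by positivity
    linarith
  have hR0 : R 0 = 0 := by simp [hR]
  have hmono : StrictMonoOn R (Ico (0 : ℝ) (1 / (γ * S))) := by
    rintro x ⟨hx0, hx⟩ y ⟨hy0, hy⟩ hxy
    rw [hform x hx, hform y hy]
    have hvx := hv1 x hx0 hx
    have hle : (1 - x * γ * S)⁻¹ ≤ (1 - y * γ * S)⁻¹ := by
      refine inv_anti₀ (hu y hy) ?_
      nlinarith
    have hlog := sub_log_le_sub_log hvx hle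
    have hlt : x * (1 - x * γ * S)⁻¹ < y * (1 - y * γ * S)⁻¹ :=
      mul_lt_mul hxy hle (by linarith) hy0
    have hsq : (x * (1 - x * γ * S)⁻¹) ^ 2 < (y * (1 - y * γ * S)⁻¹) ^ 2 :=
      pow_lt_pow_left₀ hlt (mul_nonneg hx0 (by linarith)) two_ne_zero
    have := mul_lt_mul_of_pos_left hsq (half_pos hS)
    linarith
  have hpos : 0 < 1 / (γ * S) := one_div_pos.2 hc
  have htend : Tendsto R (nhdsWithin (1 / (γ * S)) (Iio (1 / (γ * S)))) atTop := by
    have hu0 : Tendsto (fun θ : ℝ => 1 - θ * γ * S)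
        (nhdsWithin (1 / (γ * S)) (Iio (1 / (γ * S)))) (nhdsWithin 0 (Ioi 0)) := by
      refine tendsto_nhdsWithin_iff.2 ⟨?_, ?_⟩
      · have hcont : Continuous (fun θ : ℝ => 1 - θ * γ * S) := by fun_prop
        have h := (hcont.tendsto (1 / (γ * S))).mono_left
          (nhdsWithin_le_nhds (s := Iio (1 / (γ * S))))
        have h0 : 1 - 1 / (γ * S) * γ * S = 0 := by field_simp; ring
        rwa [h0] at h
      · filter_upwards [self_mem_nhdsWithin] with θ h using hu θ h
    have hid : Tendsto (fun θ : ℝ => θ) (nhdsWithin (1 / (γ * S)) (Iio (1 / (γ * S))))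
        (nhds (1 / (γ * S))) := nhdsWithin_le_nhds
    have hθv := hid.pos_mul_atTop hpos (tendsto_inv_nhdsGT_zero.comp hu0)
    have hmain := ((tendsto_pow_atTop two_ne_zero).comp hθv).const_mul_atTop (half_pos hS)
    refine tendsto_atTop_mono' _ ?_ hmain
    filter_upwards [self_mem_nhdsWithin] with θ h
    rw [hform θ h]
    have := Real.log_le_sub_one_of_pos (inv_pos.2 (hu θ h))
    simp only [Function.comp_apply]
    linarith
  refine ⟨?_, hR0, hmono, htend⟩
  obtain ⟨b, ⟨hηb, hb⟩, hb0⟩ := (((htend.eventually_gt_atTop η).and self_mem_nhdsWithin).and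
    (nhdsWithin_le_nhds (Ioi_mem_nhds hpos))).exists
  have hcont : ContinuousOn R (Icc 0 b) := by
    have hne : ∀ θ ∈ Icc 0 b, 1 - θ * γ * S ≠ 0 := fun θ h => (hu θ (h.2.trans_lt hb)).ne'
    rw [funext hR]
    refine ContinuousOn.add (ContinuousOn.mul (by fun_prop) (ContinuousOn.div (by fun_prop)
      (by fun_prop) fun θ h => pow_ne_zero 2 (hne θ h)))
      (ContinuousOn.mul (by fun_prop) (ContinuousOn.log (by fun_prop) hne))
  obtain ⟨θ, ⟨hθ0, hθb⟩, hθ⟩ := intermediate_value_Icc (le_of_lt hb0) hcont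
    (show η ∈ Icc (R 0) (R b) from ⟨by rw [hR0]; exact hη.le, hηb.le⟩)
  have hθpos : 0 < θ := by
    refine lt_of_le_of_ne hθ0 ?_
    rintro rfl
    linarith
  refine ⟨θ, ⟨⟨hθpos, hθb.trans_lt hb⟩, hθ⟩, ?_⟩
  rintro φ ⟨hφ, hφη⟩
  exact hmono.injOn (Ioo_subset_Ico_self hφ) ⟨hθ0, hθb.trans_lt hb⟩ (hφη.trans hθ.symm)
end

section
/- Let C > 0, D ≥ 0, γ > 0 and θ > 0 with θγ < C. Then the equation S = (1/C) · ( D / Γ(S; θ, γ)² + 1 ), where Γ(S; θ, γ) = (γ(1 − θγS) + θ)/(1 − θγS)², has a unique solution S in the interval [1/C, 1/(θγ)). -/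
/-!
With `u = 1 - θγS`, the right-hand side of the equation is `(D h(u)² + 1) / C`, where
`h(u) = 1 / Γ = u² / (γu + θ)` is nondecreasing and continuous on `u ≥ 0`. As `u` decreases in `S`,
the right-hand side is nonincreasing in `S` on `[1/C, 1/(θγ)]`, which gives uniqueness. It is at
least `1/C` at the left endpoint, and equals `1/C < 1/(θγ)` at the right endpoint (where `u = 0`),
so the intermediate value theorem gives existence, and the solution is not the right endpoint.
-/

open Set

/-- The function `u ↦ u² / (γu + θ)`, the reciprocal of `Γ` at `u = 1 - θγS`, is nondecreasing on
`u ≥ 0`. -/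
lemma sq_div_affine_le {γ θ u v : ℝ} (hγ : 0 < γ) (hθ : 0 < θ) (hu : 0 ≤ u) (huv : u ≤ v) :
    u ^ 2 / (γ * u + θ) ≤ v ^ 2 / (γ * v + θ) := by
  have hv : 0 ≤ v := hu.trans huv
  rw [div_le_div_iff₀ (by positivity) (by positivity)]
  have h1 : 0 ≤ γ * (u * v) * (v - u) := mul_nonneg (by positivity) (by linarith)
  have h2 : 0 ≤ θ * (v + u) * (v - u) := mul_nonneg (by positivity) (by linarith)
  nlinarith

/-- For `C > 0`, `D ≥ 0`, `γ > 0` and `θ > 0` with `θγ < C`, the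
fixed-point equation `S = (1/C)(D/Γ(S;θ,γ)² + 1)`, with
`Γ(S;θ,γ) = (γ(1−θγS)+θ)/(1−θγS)²`, has a unique solution `S ∈ [1/C, 1/(θγ))`. -/
theorem exists_unique_fixedPoint_S (C D γ θ : ℝ) (hC : 0 < C) (hD : 0 ≤ D)
    (hγ : 0 < γ) (hθ : 0 < θ) (hθC : θ * γ < C)
    (Γ : ℝ → ℝ) (hΓ : ∀ S, Γ S = (γ * (1 - θ * γ * S) + θ) / (1 - θ * γ * S) ^ 2) :
    ∃! S : ℝ, S ∈ Ico (1 / C) (1 / (θ * γ)) ∧ S = 1 / C * (D / (Γ S) ^ 2 + 1) := by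
  have hθγ : 0 < θ * γ := mul_pos hθ hγ
  have hlt : 1 / C < 1 / (θ * γ) := one_div_lt_one_div_of_lt hθγ hθC
  have hu : ∀ S ≤ 1 / (θ * γ), 0 ≤ 1 - θ * γ * S := by
    intro S hS
    rw [le_div_iff₀ hθγ] at hS
    linarith
  set R : ℝ → ℝ := fun S =>
    1 / C * (D * ((1 - θ * γ * S) ^ 2 / (γ * (1 - θ * γ * S) + θ)) ^ 2 + 1) with hR
  -- No side condition is needed: at `S = 1/(θγ)` both sides take the value `1/C`, because
  -- division by zero gives zero.
  have hΓR : ∀ S, 1 / C * (D / (Γ S) ^ 2 + 1) = R S := by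
    intro S
    simp only [hR, hΓ, div_eq_mul_inv D, ← inv_pow, inv_div]
  have hanti : AntitoneOn R (Iic (1 / (θ * γ))) := by
    intro S _ T hT hST
    have huT := hu T hT
    have hle : 1 - θ * γ * T ≤ 1 - θ * γ * S := by
      linarith [mul_le_mul_of_nonneg_left hST hθγ.le]
    have hh := sq_div_affine_le hγ hθ huT hle
    simp only [hR]
    gcongr
  have hcont : ContinuousOn R (Icc (1 / C) (1 / (θ * γ))) := by
    have hne : ∀ S ∈ Icc (1 / C) (1 / (θ * γ)), γ * (1 - θ * γ * S) + θ ≠ 0 := by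
      intro S hS
      have := hu S hS.2
      positivity
    fun_prop (disch := assumption)
  have hleft : 1 / C ≤ R (1 / C) := by
    simp only [hR]
    exact le_mul_of_one_le_right (by positivity) (le_add_of_nonneg_left (by positivity))
  have hright : R (1 / (θ * γ)) = 1 / C := by
    simp only [hR, mul_one_div_cancel hθγ.ne']
    simp
  simp only [hΓR]
  obtain ⟨S, hS, hSR⟩ : ∃ S ∈ Icc (1 / C) (1 / (θ * γ)), S - R S = 0 :=
    intermediate_value_Icc hlt.le (continuousOn_id.sub hcont)
      ⟨sub_nonpos.2 hleft, sub_nonneg.2 (hright.trans_le hlt.le)⟩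
  have hSne : S ≠ 1 / (θ * γ) := by
    rintro rfl
    linarith
  refine ⟨S, ⟨⟨hS.1, lt_of_le_of_ne hS.2 hSne⟩, sub_eq_zero.1 hSR⟩, ?_⟩
  rintro T ⟨hT, hTR⟩
  rcases le_total S T with h | h
  · linarith [hanti hS.2 hT.2.le h]
  · linarith [hanti hT.2.le hS.2 h]
end

section
/- Let Σ be an n×n real symmetric positive definite matrix, μ ∈ ℝⁿ, γ > 0 and θ > 0 with θγ < C, where A = 1ᵀΣ⁻¹μ, C = 1ᵀΣ⁻¹1, B = μᵀΣ⁻¹μ, D = BC − A². Let S*(θ) be the unique solution in [1/C, 1/(θγ)) of S = (1/C)(D/Γ(S;θ,γ)² + 1), where Γ(S;θ,γ) = (γ(1−θγS)+θ)/(1−θγS)², and write Γ* = Γ(S*(θ); θ, γ). Then the portfolio a*(θ) = (1/Γ*) Σ⁻¹μ + (1 − A/Γ*) Σ⁻¹1 / C satisfies 1ᵀa*(θ) = 1 and a*(θ)ᵀ Σ a*(θ) = S*(θ), and a*(θ) minimises the function a ↦ −(1/(2θ)) ln(1 − θγ aᵀΣa) − ⟨a, μ⟩ + θ aᵀΣa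 / (2(1 − θγ aᵀΣa)) over the set {a ∈ ℝⁿ : 1ᵀa = 1, θγ aᵀΣa < 1}. -/
/-!
Write `S(a) = aᵀΣa` and `f(s) = -(1/(2θ)) log (1 - θγ s) + θ s / (2 (1 - θγ s))`, so that
`L a = f(S(a)) - ⟨a, μ⟩`. On `{s | θγ s < 1}` the function `f` is convex with `f' = Γ / 2`, so it lies
above its tangent at `S*` (`tangent_le`). Since `Σ a* = (1/Γ*) μ + k 1`, the convexity of the
quadratic form (`quad_tangent_le`) gives `S(a) ≥ S(a*) + (2/Γ*) ⟨a - a*, μ⟩` whenever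
`1ᵀa = 1ᵀa* = 1`. Multiplying by `Γ*/2 > 0` and adding the tangent inequality gives `L a* ≤ L a`.
The identity `1ᵀa* = 1` is linear in `a*`, and `a*ᵀΣa* = S*` follows from the formula for `Σ a*` and the
fixed-point equation.
-/

open Matrix Set

lemma dotProduct_mulVec_symm {n : ℕ} {M : Matrix (Fin n) (Fin n) ℝ} (hM : Mᵀ = M)
    (x y : Fin n → ℝ) : x ⬝ᵥ M *ᵥ y = y ⬝ᵥ M *ᵥ x := by
  rw [dotProduct_mulVec, ← mulVec_transpose, hM, dotProduct_comm]

/-- The quadratic form of a positive definite matrix lies above its tangent at `b`. -/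
lemma quad_tangent_le {n : ℕ} {M : Matrix (Fin n) (Fin n) ℝ} (hM : M.PosDef)
    (a b : Fin n → ℝ) : b ⬝ᵥ M *ᵥ b + 2 * ((a - b) ⬝ᵥ M *ᵥ b) ≤ a ⬝ᵥ M *ᵥ a := by
  have hT : Mᵀ = M := by simpa using hM.isHermitian.eq
  have h := hM.posSemidef.dotProduct_mulVec_nonneg (a - b)
  have hs := dotProduct_mulVec_symm hT a b
  simp only [star_trivial, mulVec_sub, dotProduct_sub, sub_dotProduct] at h ⊢
  linarith

/-- The tangent inequality at `s₀` for the convex function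
`s ↦ -(1/(2θ)) log (1 - θγ s) + θ s / (2 (1 - θγ s))`, whose derivative is `Γ / 2`. -/
lemma tangent_le {γ θ s s₀ : ℝ} (hγ : 0 < γ) (hθ : 0 < θ) (hs : θ * γ * s < 1)
    (hs₀ : θ * γ * s₀ < 1) :
    -(1 / (2 * θ)) * Real.log (1 - θ * γ * s₀) + θ * s₀ / (2 * (1 - θ * γ * s₀))
      + (γ * (1 - θ * γ * s₀) + θ) / (1 - θ * γ * s₀) ^ 2 / 2 * (s - s₀)
      ≤ -(1 / (2 * θ)) * Real.log (1 - θ * γ * s) + θ * s / (2 * (1 - θ * γ * s)) := by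
  obtain ⟨u, hu⟩ : ∃ u, u = 1 - θ * γ * s := ⟨_, rfl⟩
  obtain ⟨v, hv⟩ : ∃ v, v = 1 - θ * γ * s₀ := ⟨_, rfl⟩
  have hu0 : 0 < u := by linarith
  have hv0 : 0 < v := by linarith
  have es : s = (1 - u) / (θ * γ) := by rw [hu]; field_simp; ring
  have es₀ : s₀ = (1 - v) / (θ * γ) := by rw [hv]; field_simp; ring
  rw [← hu, ← hv, es, es₀]
  have hlog := Real.log_le_sub_one_of_pos (div_pos hu0 hv0)
  rw [Real.log_div hu0.ne' hv0.ne'] at hlog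
  -- The remainder splits into that of `-log` and that of `1 / u`, both nonnegative.
  have h1 : 0 ≤ 1 / (2 * θ) * (u / v - 1 - (Real.log u - Real.log v)) :=
    mul_nonneg (by positivity) (by linarith)
  have h2 : 0 ≤ (u - v) ^ 2 / (2 * γ * u * v ^ 2) := by positivity
  have key : -(1 / (2 * θ)) * Real.log u + θ * ((1 - u) / (θ * γ)) / (2 * u)
      - (-(1 / (2 * θ)) * Real.log v + θ * ((1 - v) / (θ * γ)) / (2 * v)
      + (γ * v + θ) / v ^ 2 / 2 * ((1 - u) / (θ * γ) - (1 - v) / (θ * γ)))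
      = 1 / (2 * θ) * (u / v - 1 - (Real.log u - Real.log v))
        + (u - v) ^ 2 / (2 * γ * u * v ^ 2) := by
    field_simp
    ring
  linarith

/-- With Merton constants `A, B, C, D` of `(Σ, μ)`, `γ > 0`, `θ > 0`
with `θγ < C`, and `S*(θ)` the unique solution in `[1/C, 1/(θγ))` of the fixed-point
equation `S = (1/C)(D/Γ(S;θ,γ)² + 1)`, the portfolio
`a*(θ) = (1/Γ*) Σ⁻¹μ + (1 − A/Γ*) Σ⁻¹1/C`, with `Γ* = Γ(S*(θ);θ,γ)`, has weights
summing to one, satisfies `a*(θ)ᵀΣa*(θ) = S*(θ)`, and minimises the worst-case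
mean–variance Lagrangian over `{a : 1ᵀa = 1, θγ aᵀΣa < 1}`. -/
theorem worstCase_meanVariance_optimal_portfolio {n : ℕ} (hn : 1 ≤ n)
    (Sig : Matrix (Fin n) (Fin n) ℝ) (hSig : Sig.PosDef) (μ : Fin n → ℝ)
    (γ θ : ℝ) (hγ : 0 < γ) (hθ : 0 < θ)
    (A B C D : ℝ)
    (hA : A = (1 : Fin n → ℝ) ⬝ᵥ Sig⁻¹ *ᵥ μ)
    (hB : B = μ ⬝ᵥ Sig⁻¹ *ᵥ μ)
    (hC : C = (1 : Fin n → ℝ) ⬝ᵥ Sig⁻¹ *ᵥ (1 : Fin n → ℝ))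
    (hD : D = B * C - A ^ 2) (hθC : θ * γ < C)
    (Γ : ℝ → ℝ) (hΓ : ∀ S, Γ S = (γ * (1 - θ * γ * S) + θ) / (1 - θ * γ * S) ^ 2)
    (Sstar : ℝ) (hSmem : Sstar ∈ Ico (1 / C) (1 / (θ * γ)))
    (hSfix : Sstar = 1 / C * (D / (Γ Sstar) ^ 2 + 1))
    (astar : Fin n → ℝ)
    (hastar : astar = (1 / Γ Sstar) • (Sig⁻¹ *ᵥ μ)
        + (1 - A / Γ Sstar) • ((1 / C) • (Sig⁻¹ *ᵥ (1 : Fin n → ℝ))))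
    (L : (Fin n → ℝ) → ℝ)
    (hL : ∀ a, L a = -(1 / (2 * θ)) * Real.log (1 - θ * γ * (a ⬝ᵥ Sig *ᵥ a)) - a ⬝ᵥ μ
        + θ * (a ⬝ᵥ Sig *ᵥ a) / (2 * (1 - θ * γ * (a ⬝ᵥ Sig *ᵥ a)))) :
    (1 : Fin n → ℝ) ⬝ᵥ astar = 1 ∧ astar ⬝ᵥ Sig *ᵥ astar = Sstar ∧
    ∀ a : Fin n → ℝ, (1 : Fin n → ℝ) ⬝ᵥ a = 1 → θ * γ * (a ⬝ᵥ Sig *ᵥ a) < 1 →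
      L astar ≤ L a := by
  have hθγ : 0 < θ * γ := mul_pos hθ hγ
  have hC0 : 0 < C := hθγ.trans hθC
  have hS1 : θ * γ * Sstar < 1 := by
    have h := (lt_div_iff₀ hθγ).1 hSmem.2
    linarith
  have hv0 : 0 < 1 - θ * γ * Sstar := by linarith
  have hG0 : 0 < Γ Sstar := by rw [hΓ]; positivity
  have htan := fun s (hs : θ * γ * s < 1) => tangent_le hγ hθ hs hS1
  rw [← hΓ] at htan
  generalize Γ Sstar = G at *
  have hT : (Sig⁻¹)ᵀ = Sig⁻¹ := by simpa using hSig.inv.isHermitian.eq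
  have hdet : IsUnit Sig.det := hSig.det_pos.ne'.isUnit
  have hone : (1 : Fin n → ℝ) ⬝ᵥ astar = 1 := by
    simp only [hastar, dotProduct_add, dotProduct_smul, smul_eq_mul, ← hA, ← hC]
    field_simp
    ring
  have hmu : astar ⬝ᵥ μ = B / G + (1 - A / G) * (A / C) := by
    rw [dotProduct_comm, hastar]
    simp only [dotProduct_add, dotProduct_smul, smul_eq_mul, ← hB,
      dotProduct_mulVec_symm hT μ 1, ← hA]
    ring
  have hSa : Sig *ᵥ astar = (1 / G) • μ + ((1 - A / G) * (1 / C)) • (1 : Fin n → ℝ) := by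
    simp only [hastar, mulVec_add, mulVec_smul, mulVec_mulVec, mul_nonsing_inv _ hdet,
      one_mulVec, smul_smul]
  have hquad : astar ⬝ᵥ Sig *ᵥ astar = Sstar := by
    rw [hSa, hSfix, hD]
    simp only [dotProduct_add, dotProduct_smul, smul_eq_mul, hmu, dotProduct_comm astar 1, hone]
    field_simp
    ring
  refine ⟨hone, hquad, fun a ha hlt => ?_⟩
  have hq := quad_tangent_le hSig a astar
  have hcross : (a - astar) ⬝ᵥ Sig *ᵥ astar = (a ⬝ᵥ μ - astar ⬝ᵥ μ) / G := by
    rw [hSa]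
    simp only [dotProduct_add, dotProduct_smul, smul_eq_mul, sub_dotProduct,
      dotProduct_comm a 1, dotProduct_comm astar 1, ha, hone]
    ring
  rw [hcross, hquad] at hq
  have hmul : a ⬝ᵥ μ - astar ⬝ᵥ μ ≤ G / 2 * (a ⬝ᵥ Sig *ᵥ a - Sstar) := by
    calc a ⬝ᵥ μ - astar ⬝ᵥ μ = G / 2 * (2 * ((a ⬝ᵥ μ - astar ⬝ᵥ μ) / G)) := by field_simp
      _ ≤ _ := by gcongr; linarith
  have ht := htan _ hlt
  rw [hL, hL, hquad]
  linarith
end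

section
/- Let X be distributed as the multivariate Gaussian N(μ,Σ) on ℝⁿ and let θ > 0. (i) For every a ∈ ℝⁿ with θ aᵀΣa < 1, ∫ exp((θ/2) ⟨a, x−μ⟩²) dN(μ,Σ)(x) = (1 − θ aᵀΣa)^{−1/2}. (ii) Consequently, the unique minimiser over {a ∈ ℝⁿ : 1ᵀa = 1, θ aᵀΣa < 1} of a ↦ (1/θ) ln ∫ exp((θ/2) ⟨a, x−μ⟩²) dN(μ,Σ)(x) is a₀ = Σ⁻¹1 / (1ᵀΣ⁻¹1), which is also the unique minimiser of a ↦ aᵀΣa over {a : 1ᵀa = 1}; i.e. in the minimum-variance case the optimal worst-case portfolio coincides with the optimal nominal portfolio. -/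
/-!
The integrand `exp((θ/2)⟨a, y⟩²)` times the density of `N(0, Σ)` is, up to normalisation,
`exp(-½ yᵀQy)` for the rank-one perturbation `Q = Σ⁻¹ - θ a aᵀ`. By Cauchy–Schwarz for the form
`Σ⁻¹` the matrix `Q` is positive definite as soon as `θ aᵀΣa < 1` (`posDef_tilt`), and the matrix
determinant lemma gives `det Q = det Σ⁻¹ (1 - θ aᵀΣa)` (`det_tilt`). The Gaussian integral
`∫ exp(-½ yᵀQy) dy = √((2π)ⁿ / det Q)` (`integral_exp_quadForm`) then yields the closed form, and
no separate integrability argument is needed.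

The closed form is a strictly increasing function of `aᵀΣa`, so both minimisation problems reduce
to minimising `aᵀΣa` on the hyperplane `1ᵀa = 1`. There `Σa₀` is the constant vector `c·1`, hence
`(a - a₀)ᵀΣ(a - a₀) = aᵀΣa - a₀ᵀΣa₀`, which is positive unless `a = a₀`.
-/

open Matrix MeasureTheory

/-- The Gaussian integral `∫ exp(-½ |y|²) dy` over `ℝⁿ`, by Fubini. -/
lemma integral_exp_dotProduct_self (n : ℕ) :
    ∫ y : Fin n → ℝ, Real.exp (-(1 / 2) * (y ⬝ᵥ y)) = Real.sqrt ((2 * Real.pi) ^ n) := by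
  have h : ∀ y : Fin n → ℝ, Real.exp (-(1 / 2) * (y ⬝ᵥ y))
      = ∏ i, Real.exp (-(1 / 2) * (y i) ^ 2) := by
    intro y
    rw [← Real.exp_sum, dotProduct, Finset.mul_sum]
    simp only [sq]
  simp_rw [h]
  rw [integral_fintype_prod_volume_eq_prod
    (f := fun (_ : Fin n) (v : ℝ) => Real.exp (-(1 / 2) * v ^ 2))]
  simp only [integral_gaussian, Finset.prod_const, Finset.card_univ, Fintype.card_fin]
  rw [show Real.pi / (1 / 2) = 2 * Real.pi by ring]
  refine (Real.sqrt_eq_iff_mul_self_eq (by positivity) (by positivity)).2 ?_ |>.symm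
  rw [← mul_pow, Real.mul_self_sqrt (by positivity)]

/-- Factor `Q = BᵀB` and change variables by the invertible matrix `B`. -/
lemma integral_exp_quadForm {n : ℕ} {Q : Matrix (Fin n) (Fin n) ℝ} (hQ : Q.PosDef) :
    ∫ y : Fin n → ℝ, Real.exp (-(1 / 2) * (y ⬝ᵥ Q *ᵥ y))
      = Real.sqrt ((2 * Real.pi) ^ n) / Real.sqrt Q.det := by
  open scoped MatrixOrder Matrix.Norms.L2Operator in
  obtain ⟨B, -, hB⟩ := CStarAlgebra.isStrictlyPositive_iff_eq_star_mul_self.mp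
        hQ.isStrictlyPositive
  have hB' : Q = Bᵀ * B := by simpa [star_eq_conjTranspose] using hB
  have hdet : Q.det = B.det ^ 2 := by rw [hB', det_mul, det_transpose, sq]
  have hB0 : B.det ≠ 0 := by
    intro h
    have := hQ.det_pos
    rw [hdet, h] at this
    simp at this
  have hq : ∀ y : Fin n → ℝ, y ⬝ᵥ Q *ᵥ y = toLin' B y ⬝ᵥ toLin' B y := by
    intro y
    rw [toLin'_apply, hB', ← mulVec_mulVec, dotProduct_mulVec, vecMul_transpose]
  simp_rw [hq]
  have hm := Real.map_matrix_volume_pi_eq_smul_volume_pi hB0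
  rw [← integral_map (μ := volume) (φ := toLin' B)
    (f := fun z : Fin n → ℝ => Real.exp (-(1 / 2) * (z ⬝ᵥ z)))
    (LinearMap.continuous_of_finiteDimensional _).aemeasurable
    (by
      refine Continuous.aestronglyMeasurable ?_
      unfold dotProduct
      fun_prop), hm, integral_smul_measure,
    integral_exp_dotProduct_self, hdet, Real.sqrt_sq_eq_abs,
    ENNReal.toReal_ofReal (abs_nonneg _), abs_inv, smul_eq_mul]
  ring

/-- The matrix `Q = Σ⁻¹ - θ a aᵀ` of the quadratic form obtained by tilting the Gaussian density
by `exp((θ/2)⟨a, ·⟩²)`. -/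
noncomputable def tilt {n : ℕ} (Sig : Matrix (Fin n) (Fin n) ℝ) (θ : ℝ) (a : Fin n → ℝ) :
    Matrix (Fin n) (Fin n) ℝ :=
  Sig⁻¹ - θ • vecMulVec a a

lemma tilt_quadForm {n : ℕ} (Sig : Matrix (Fin n) (Fin n) ℝ) (θ : ℝ) (a y : Fin n → ℝ) :
    y ⬝ᵥ tilt Sig θ a *ᵥ y = y ⬝ᵥ Sig⁻¹ *ᵥ y - θ * (a ⬝ᵥ y) ^ 2 := by
  rw [tilt, sub_mulVec, dotProduct_sub, smul_mulVec, vecMulVec_mulVec]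
  simp only [op_smul_eq_smul, dotProduct_smul, smul_eq_mul, dotProduct_comm y a, sq]

lemma posDef_dotProduct_comm {n : ℕ} {S : Matrix (Fin n) (Fin n) ℝ} (hS : S.PosDef)
    (x y : Fin n → ℝ) : x ⬝ᵥ S *ᵥ y = y ⬝ᵥ S *ᵥ x := by
  have h : Sᵀ = S := by simpa using hS.isHermitian.eq
  rw [dotProduct_mulVec, ← mulVec_transpose, h, dotProduct_comm]

lemma posDef_quadForm_sub {n : ℕ} {S : Matrix (Fin n) (Fin n) ℝ} (hS : S.PosDef)
    (x y : Fin n → ℝ) :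
    (x - y) ⬝ᵥ S *ᵥ (x - y) = x ⬝ᵥ S *ᵥ x - 2 * (x ⬝ᵥ S *ᵥ y) + y ⬝ᵥ S *ᵥ y := by
  rw [mulVec_sub, dotProduct_sub, sub_dotProduct, sub_dotProduct, posDef_dotProduct_comm hS y x]
  ring

lemma posDef_tilt {n : ℕ} {Sig : Matrix (Fin n) (Fin n) ℝ} (hSig : Sig.PosDef)
    {θ : ℝ} (hθ : 0 < θ) {a : Fin n → ℝ} (ha : θ * (a ⬝ᵥ Sig *ᵥ a) < 1) :
    (tilt Sig θ a).PosDef := by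
  have hu : IsUnit Sig.det := hSig.det_pos.ne'.isUnit
  refine PosDef.of_dotProduct_mulVec_pos ?_ fun y hy => ?_
  · refine IsHermitian.sub hSig.inv.isHermitian ?_
    ext i j
    simp [vecMulVec_apply, mul_comm]
  · rw [star_trivial, tilt_quadForm]
    have hpos : 0 < y ⬝ᵥ Sig⁻¹ *ᵥ y := by simpa using hSig.inv.dotProduct_mulVec_pos hy
    by_cases hs : a ⬝ᵥ y = 0
    · simpa [hs] using hpos
    -- Cauchy–Schwarz in the form `0 ≤ ‖y - tΣa‖²` for the norm of `Σ⁻¹`, at `t = θ⟨a, y⟩`.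
    · set t := θ * (a ⬝ᵥ y) with ht
      have h0 : 0 ≤ (y - t • (Sig *ᵥ a)) ⬝ᵥ Sig⁻¹ *ᵥ (y - t • (Sig *ᵥ a)) := by
        simpa using hSig.inv.posSemidef.dotProduct_mulVec_nonneg (y - t • (Sig *ᵥ a))
      rw [posDef_quadForm_sub hSig.inv, mulVec_smul, mulVec_mulVec, nonsing_inv_mul _ hu,
        one_mulVec, dotProduct_smul, smul_dotProduct, dotProduct_smul, dotProduct_comm y a,
        dotProduct_comm (Sig *ᵥ a) a] at h0
      simp only [smul_eq_mul, ht] at h0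
      have h1 : 0 < θ * (a ⬝ᵥ y) ^ 2 * (1 - θ * (a ⬝ᵥ Sig *ᵥ a)) := by
        have : 0 < 1 - θ * (a ⬝ᵥ Sig *ᵥ a) := by linarith
        positivity
      nlinarith

lemma det_tilt {n : ℕ} {Sig : Matrix (Fin n) (Fin n) ℝ} (hSig : Sig.PosDef)
    (θ : ℝ) (a : Fin n → ℝ) :
    (tilt Sig θ a).det = Sig.det⁻¹ * (1 - θ * (a ⬝ᵥ Sig *ᵥ a)) := by
  have hu : IsUnit Sig.det := hSig.det_pos.ne'.isUnit
  have h : tilt Sig θ a = Sig⁻¹ *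
      (1 + replicateCol Unit (-θ • (Sig *ᵥ a)) * replicateRow Unit a) := by
    rw [← vecMulVec_eq, mul_add, mul_one, mul_vecMulVec, mulVec_smul, mulVec_mulVec,
      nonsing_inv_mul _ hu, one_mulVec, smul_vecMulVec, tilt, neg_smul, sub_eq_add_neg]
  rw [h, det_mul, det_one_add_replicateCol_mul_replicateRow, det_nonsing_inv,
    Ring.inverse_eq_inv', dotProduct_smul, smul_eq_mul]
  ring

lemma integral_exp_sq_gaussianMeasure {n : ℕ} (μ : Fin n → ℝ)
    {Sig : Matrix (Fin n) (Fin n) ℝ} (hSig : Sig.PosDef)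
    {θ : ℝ} (hθ : 0 < θ) {a : Fin n → ℝ} (ha : θ * (a ⬝ᵥ Sig *ᵥ a) < 1) :
    ∫ x, Real.exp (θ / 2 * (a ⬝ᵥ (x - μ)) ^ 2) ∂(gaussianMeasure μ Sig)
        = (1 - θ * (a ⬝ᵥ Sig *ᵥ a)) ^ (-(1 / 2) : ℝ) := by
  have hpdf : ∀ x, 0 ≤ gaussianPdf μ Sig x := fun x => by unfold gaussianPdf; positivity
  rw [gaussianMeasure, integral_withDensity_eq_integral_toReal_smul
    (continuous_gaussianPdf μ Sig).measurable.ennreal_ofReal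
    (Filter.Eventually.of_forall fun _ => ENNReal.ofReal_lt_top)]
  have hint : ∀ x, (ENNReal.ofReal (gaussianPdf μ Sig x)).toReal •
      Real.exp (θ / 2 * (a ⬝ᵥ (x - μ)) ^ 2)
      = (Real.sqrt ((2 * Real.pi) ^ n * Sig.det))⁻¹ *
        Real.exp (-(1 / 2) * ((x - μ) ⬝ᵥ tilt Sig θ a *ᵥ (x - μ))) := by
    intro x
    rw [ENNReal.toReal_ofReal (hpdf x), smul_eq_mul, tilt_quadForm, gaussianPdf, div_mul_eq_mul_div,
      ← Real.exp_add, div_eq_inv_mul]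
    congr 2
    ring
  simp_rw [hint]
  rw [integral_const_mul, integral_sub_right_eq_self (μ := volume)
      (fun y : Fin n → ℝ => Real.exp (-(1 / 2) * (y ⬝ᵥ tilt Sig θ a *ᵥ y))) μ,
    integral_exp_quadForm (posDef_tilt hSig hθ ha), det_tilt hSig]
  have hd := hSig.det_pos
  have hD : 0 < 1 - θ * (a ⬝ᵥ Sig *ᵥ a) := by linarith
  rw [Real.rpow_neg hD.le, ← Real.sqrt_eq_rpow, Real.sqrt_mul (by positivity),
    Real.sqrt_mul (by positivity), Real.sqrt_inv]
  have h1 := Real.sqrt_pos.2 hd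
  have h2 := Real.sqrt_pos.2 hD
  have h3 : 0 < Real.sqrt ((2 * Real.pi) ^ n) := Real.sqrt_pos.2 (by positivity)
  field_simp

/-- Minimum-variance case. (i) For `θ > 0` and any `a` with
`θ aᵀΣa < 1`, `∫ exp((θ/2)⟨a,x−μ⟩²) dN(μ,Σ)(x) = (1 − θ aᵀΣa)^{-1/2}`.
(ii) The portfolio `a₀ = Σ⁻¹1/(1ᵀΣ⁻¹1)` (assumed in the well-posedness domain
`θ a₀ᵀΣa₀ < 1`) is the unique minimiser over `{a : 1ᵀa = 1, θ aᵀΣa < 1}` of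
`a ↦ (1/θ) ln ∫ exp((θ/2)⟨a,x−μ⟩²) dN(μ,Σ)`, and is also the unique minimiser of
`a ↦ aᵀΣa` over `{a : 1ᵀa = 1}`: the optimal worst-case portfolio coincides with
the optimal nominal portfolio. -/
theorem minimumVariance_worstCase_eq_nominal {n : ℕ} (hn : 1 ≤ n)
    (μ : Fin n → ℝ) (Sig : Matrix (Fin n) (Fin n) ℝ) (hSig : Sig.PosDef)
    (θ : ℝ) (hθ : 0 < θ)
    (a₀ : Fin n → ℝ)
    (ha₀ : a₀ = (1 / ((1 : Fin n → ℝ) ⬝ᵥ Sig⁻¹ *ᵥ (1 : Fin n → ℝ))) •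
        (Sig⁻¹ *ᵥ (1 : Fin n → ℝ)))
    (hdom : θ * (a₀ ⬝ᵥ Sig *ᵥ a₀) < 1) :
    (∀ a : Fin n → ℝ, θ * (a ⬝ᵥ Sig *ᵥ a) < 1 →
      ∫ x, Real.exp (θ / 2 * (a ⬝ᵥ (x - μ)) ^ 2) ∂(gaussianMeasure μ Sig)
        = (1 - θ * (a ⬝ᵥ Sig *ᵥ a)) ^ (-(1 / 2) : ℝ)) ∧
    ((1 : Fin n → ℝ) ⬝ᵥ a₀ = 1 ∧
      ∀ a : Fin n → ℝ, (1 : Fin n → ℝ) ⬝ᵥ a = 1 → θ * (a ⬝ᵥ Sig *ᵥ a) < 1 → a ≠ a₀ →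
        (1 / θ) * Real.log (∫ x, Real.exp (θ / 2 * (a₀ ⬝ᵥ (x - μ)) ^ 2)
            ∂(gaussianMeasure μ Sig))
          < (1 / θ) * Real.log (∫ x, Real.exp (θ / 2 * (a ⬝ᵥ (x - μ)) ^ 2)
            ∂(gaussianMeasure μ Sig))) ∧
    (∀ a : Fin n → ℝ, (1 : Fin n → ℝ) ⬝ᵥ a = 1 → a ≠ a₀ →
      a₀ ⬝ᵥ Sig *ᵥ a₀ < a ⬝ᵥ Sig *ᵥ a) := by
  have hu : IsUnit Sig.det := hSig.det_pos.ne'.isUnit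
  have hone : (1 : Fin n → ℝ) ≠ 0 := fun h => by
    have := congrFun h ⟨0, hn⟩
    simp at this
  have hc : 0 < (1 : Fin n → ℝ) ⬝ᵥ Sig⁻¹ *ᵥ (1 : Fin n → ℝ) := by
    simpa using hSig.inv.dotProduct_mulVec_pos hone
  have hsum : (1 : Fin n → ℝ) ⬝ᵥ a₀ = 1 := by
    rw [ha₀, dotProduct_smul, smul_eq_mul, one_div, inv_mul_cancel₀ (ne_of_gt hc)]
  -- First-order condition: `Σa₀` is a multiple of the constraint normal `1`.
  have hSa : Sig *ᵥ a₀ = (1 / ((1 : Fin n → ℝ) ⬝ᵥ Sig⁻¹ *ᵥ (1 : Fin n → ℝ))) •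
      (1 : Fin n → ℝ) := by
    conv_lhs => rw [ha₀]
    rw [mulVec_smul, mulVec_mulVec, mul_nonsing_inv _ hu, one_mulVec]
  have hcross : ∀ a : Fin n → ℝ, (1 : Fin n → ℝ) ⬝ᵥ a = 1 →
      a ⬝ᵥ Sig *ᵥ a₀ = 1 / ((1 : Fin n → ℝ) ⬝ᵥ Sig⁻¹ *ᵥ (1 : Fin n → ℝ)) := by
    intro a ha
    rw [hSa, dotProduct_smul, dotProduct_comm a, ha, smul_eq_mul, mul_one]
  have hmin : ∀ a : Fin n → ℝ, (1 : Fin n → ℝ) ⬝ᵥ a = 1 → a ≠ a₀ →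
      a₀ ⬝ᵥ Sig *ᵥ a₀ < a ⬝ᵥ Sig *ᵥ a := by
    intro a ha hne
    have hpos : 0 < (a - a₀) ⬝ᵥ Sig *ᵥ (a - a₀) := by
      simpa using hSig.dotProduct_mulVec_pos (sub_ne_zero.2 hne)
    rw [posDef_quadForm_sub hSig, hcross a ha, hcross a₀ hsum] at hpos
    rw [hcross a₀ hsum]
    linarith
  refine ⟨fun a ha => integral_exp_sq_gaussianMeasure μ hSig hθ ha,
    ⟨hsum, fun a ha hda hne => ?_⟩, hmin⟩
  rw [integral_exp_sq_gaussianMeasure μ hSig hθ hdom, integral_exp_sq_gaussianMeasure μ hSig hθ hda,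
    Real.log_rpow (by linarith), Real.log_rpow (by linarith)]
  have hlt := mul_lt_mul_of_pos_left (hmin a ha hne) hθ
  have hlog := Real.log_lt_log (show 0 < 1 - θ * (a ⬝ᵥ Sig *ᵥ a) by linarith)
    (show 1 - θ * (a ⬝ᵥ Sig *ᵥ a) < 1 - θ * (a₀ ⬝ᵥ Sig *ᵥ a₀) by linarith)
  exact mul_lt_mul_of_pos_left (by linarith) (by positivity)
end

section
/- Let Σ be an n×n real symmetric positive definite matrix, μ ∈ ℝⁿ, let γ > 0 be finite and θ > 0 with θγ < C. Let a*_nom = (1/γ) Σ⁻¹μ + (1 − A/γ) Σ⁻¹1 / C be the optimal nominal mean–variance portfolio, and let a*(θ) = (1/Γ*) Σ⁻¹μ + (1 − A/Γ*) Σ⁻¹1 / C be the optimal worst-case portfolio, where Γ* = Γ(S*(θ); θ, γ) with S*(θ) the unique solution in [1/C, 1/(θγ)) of S = (1/C)(D/Γ(S;θ,γ)² + 1) and Γ(S;θ,γ) = (γ(1−θγS)+θ)/(1−θγS)². Then a*(θ) = a*_nom if and only if μ = (A/C)·1, i.e. if and only if all components of μ are equal. -/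
/-!
Both portfolios lie on the same line: with `v = Σ⁻¹(μ − (A/C)·1)`, their difference is
`a*(θ) − a*_nom = (1/Γ* − 1/γ) v`. Since `0 < θγS* < 1`, the worst-case risk aversion satisfies
`Γ* > γ`, so the scalar factor is nonzero and the portfolios agree iff `v = 0`, which by
invertibility of `Σ` means `μ = (A/C)·1`. If `μ = c·1` then `A = cC`, so `c = A/C`.
-/


open Matrix Set

/-- The worst-case risk aversion strictly exceeds the nominal one; here `t = 1 - θγS`. -/
theorem lt_worstCase_riskAversion {γ θ t : ℝ} (hγ : 0 < γ) (hθ : 0 < θ) (ht0 : 0 < t)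
    (ht1 : t < 1) : γ < (γ * t + θ) / t ^ 2 := by
  rw [lt_div_iff₀ (by positivity)]
  have : γ * t ^ 2 < γ * t := by
    apply mul_lt_mul_of_pos_left _ hγ
    nlinarith
  linarith

/-- With Merton constants `A, B, C, D`, finite `γ > 0`, `θ > 0` with
`θγ < C`, the nominal optimal portfolio `a*_nom = (1/γ)Σ⁻¹μ + (1 − A/γ)Σ⁻¹1/C` and
the worst-case optimal portfolio `a*(θ) = (1/Γ*)Σ⁻¹μ + (1 − A/Γ*)Σ⁻¹1/C` (with
`Γ* = Γ(S*(θ);θ,γ)`, `S*(θ)` the unique fixed point in `[1/C, 1/(θγ))` of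
`S = (1/C)(D/Γ(S;θ,γ)²+1)`) coincide if and only if `μ = (A/C)·1`, i.e. if and only
if all components of `μ` are equal. -/
theorem worstCase_eq_nominal_iff_symmetric_mean {n : ℕ} (hn : 1 ≤ n)
    (Sig : Matrix (Fin n) (Fin n) ℝ) (hSig : Sig.PosDef) (μ : Fin n → ℝ)
    (γ θ : ℝ) (hγ : 0 < γ) (hθ : 0 < θ)
    (A B C D : ℝ)
    (hA : A = (1 : Fin n → ℝ) ⬝ᵥ Sig⁻¹ *ᵥ μ)
    (hB : B = μ ⬝ᵥ Sig⁻¹ *ᵥ μ)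
    (hC : C = (1 : Fin n → ℝ) ⬝ᵥ Sig⁻¹ *ᵥ (1 : Fin n → ℝ))
    (hD : D = B * C - A ^ 2) (hθC : θ * γ < C)
    (Γ : ℝ → ℝ) (hΓ : ∀ S, Γ S = (γ * (1 - θ * γ * S) + θ) / (1 - θ * γ * S) ^ 2)
    (Sstar : ℝ) (hSmem : Sstar ∈ Ico (1 / C) (1 / (θ * γ)))
    (hSfix : Sstar = 1 / C * (D / (Γ Sstar) ^ 2 + 1))
    (astar : Fin n → ℝ)
    (hastar : astar = (1 / Γ Sstar) • (Sig⁻¹ *ᵥ μ)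
        + (1 - A / Γ Sstar) • ((1 / C) • (Sig⁻¹ *ᵥ (1 : Fin n → ℝ))))
    (anom : Fin n → ℝ)
    (hanom : anom = (1 / γ) • (Sig⁻¹ *ᵥ μ)
        + (1 - A / γ) • ((1 / C) • (Sig⁻¹ *ᵥ (1 : Fin n → ℝ)))) :
    (astar = anom ↔ μ = (A / C) • (1 : Fin n → ℝ)) ∧
    (μ = (A / C) • (1 : Fin n → ℝ) ↔ ∀ i j, μ i = μ j) := by
  have hθγ : 0 < θ * γ := mul_pos hθ hγ
  have hCpos : 0 < C := hθγ.trans hθC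
  have hSpos : 0 < Sstar := (one_div_pos.mpr hCpos).trans_le hSmem.1
  have hlt : θ * γ * Sstar < 1 := by
    have := (lt_div_iff₀ hθγ).mp hSmem.2
    linarith
  have hΓlt : γ < Γ Sstar := by
    rw [hΓ]
    exact lt_worstCase_riskAversion hγ hθ (by linarith) (by nlinarith [mul_pos hθγ hSpos])
  have hcoef : 1 / Γ Sstar - 1 / γ ≠ 0 :=
    (sub_neg.mpr (one_div_lt_one_div_of_lt hγ hΓlt)).ne
  have hdet : IsUnit Sig.det := (Matrix.isUnit_iff_isUnit_det _).mp hSig.isUnit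
  have hdiff : astar - anom
      = (1 / Γ Sstar - 1 / γ) • (Sig⁻¹ *ᵥ (μ - (A / C) • (1 : Fin n → ℝ))) := by
    rw [hastar, hanom, Matrix.mulVec_sub, Matrix.mulVec_smul]
    ext i
    simp only [Pi.sub_apply, Pi.add_apply, Pi.smul_apply, smul_eq_mul]
    ring
  have hinj : ∀ v : Fin n → ℝ, Sig⁻¹ *ᵥ v = 0 ↔ v = 0 := by
    intro v
    refine ⟨fun h => ?_, fun h => by rw [h, Matrix.mulVec_zero]⟩
    have h2 := congrArg (Sig *ᵥ ·) h
    simpa [Matrix.mulVec_mulVec, Matrix.mul_nonsing_inv _ hdet] using h2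
  refine ⟨?_, fun h i j => by rw [h]; simp, fun h => ?_⟩
  · rw [← sub_eq_zero, hdiff, smul_eq_zero_iff_right hcoef, hinj, sub_eq_zero]
  · have hμ : μ = μ ⟨0, hn⟩ • (1 : Fin n → ℝ) := by
      ext i
      simpa using h i ⟨0, hn⟩
    have hAC : A = μ ⟨0, hn⟩ * C := by
      rw [hA, hC, hμ, Matrix.mulVec_smul, dotProduct_smul]
      simp
    rw [hAC, mul_div_cancel_right₀ _ hCpos.ne']
    exact hμ
end

section
/- Let Σ be an n×n real symmetric positive definite matrix, μ ∈ ℝⁿ, γ > 0, η > 0. For θ ∈ (0, C/γ), let S*(θ) be the unique solution in [1/C, 1/(θγ)) of S = (1/C)(D/Γ(S;θ,γ)² + 1) with Γ(S;θ,γ) = (γ(1−θγS)+θ)/(1−θγS)², let Γ*(θ) = Γ(S*(θ);θ,γ), let a*(θ) = (1/Γ*(θ)) Σ⁻¹μ + (1 − A/Γ*(θ)) Σ⁻¹1/C, and define R(θ) = (θ/2) S*(θ) Γ*(θ) + (1/2) ln(1 − θγ S*(θ)) and L*(θ) = −(1/(2θ)) ln(1 − θγ S*(θ)) − ⟨a*(θ),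 μ⟩ + θ S*(θ)/(2(1 − θγ S*(θ))) + η/θ. Then any minimiser θ* of L* over (0, C/γ) satisfies R(θ*) = η; i.e. the optimal θ lies on the surface of the Kullback–Leibler ball of radius η. -/
open Matrix Set

/-!
With `p = 1/Γ` and `S(p) = (D p² + 1)/C`, the portfolio satisfies `⟨a, μ⟩ = A/C + (D/C) p`, so
`L*(θ)` is the value at `p = 1/Γ*(θ)` of
`ℓ(θ, p) = -(1/2θ) ln(1 - θγS(p)) - A/C - (D/C) p + θS(p)/(2(1 - θγS(p))) + η/θ`.
The variance part of `ℓ` is convex in `S` with slope `Γ(S;θ,γ)/2`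
(`variance_term_tangent_le`), which makes `1/Γ*(θ)` a global minimiser of `ℓ(θ, ·)`:
the gap `ℓ(θ, p) - L*(θ)` is at least `(D/C)(Γ*(θ)/2)(p - 1/Γ*(θ))²`.

Freeze `p₀ = 1/Γ*(θ*)`. Near `θ*` one has `ℓ(θ, p₀) ≥ L*(θ) ≥ L*(θ*) = ℓ(θ*, p₀)`, so
`ℓ(·, p₀)` has a local minimum at `θ*`. Its derivative there is `(R(θ*) - η)/θ*²`
(`hasDerivAt_frozen_lagrangian`), which must vanish. This envelope argument needs no regularity
of `θ ↦ S*(θ)`.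
-/

/-- Tangent-line inequality in `S` for the convex function
`S ↦ -(1/2θ) ln(1 - θγS) + θS/(2(1 - θγS))`, whose derivative is `Γ(S;θ,γ)/2`. -/
lemma variance_term_tangent_le {θ γ S T : ℝ} (hθ : 0 < θ) (hγ : 0 < γ)
    (hS : 0 < 1 - θ * γ * S) (hT : 0 < 1 - θ * γ * T) :
    -(1 / (2 * θ)) * Real.log (1 - θ * γ * S) + θ * S / (2 * (1 - θ * γ * S))
      + (γ * (1 - θ * γ * S) + θ) / (1 - θ * γ * S) ^ 2 / 2 * (T - S)
    ≤ -(1 / (2 * θ)) * Real.log (1 - θ * γ * T) + θ * T / (2 * (1 - θ * γ * T)) := by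
  have hlog : Real.log (1 - θ * γ * T) - Real.log (1 - θ * γ * S)
      ≤ (1 - θ * γ * T) / (1 - θ * γ * S) - 1 := by
    rw [← Real.log_div hT.ne' hS.ne']
    exact Real.log_le_sub_one_of_pos (div_pos hT hS)
  have hlog' := mul_le_mul_of_nonneg_left hlog (by positivity : 0 ≤ 1 / (2 * θ))
  -- The rational part exceeds its tangent line by an explicit square.
  have hrat : θ * T / (2 * (1 - θ * γ * T)) - θ * S / (2 * (1 - θ * γ * S))
      - (γ * (1 - θ * γ * S) + θ) / (1 - θ * γ * S) ^ 2 / 2 * (T - S)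
      - 1 / (2 * θ) * ((1 - θ * γ * T) / (1 - θ * γ * S) - 1)
      = θ ^ 2 * γ * (T - S) ^ 2 / (2 * (1 - θ * γ * S) ^ 2 * (1 - θ * γ * T)) := by
    obtain ⟨x, hx⟩ : ∃ x, x = 1 - θ * γ * S := ⟨_, rfl⟩
    obtain ⟨y, hy⟩ : ∃ y, y = 1 - θ * γ * T := ⟨_, rfl⟩
    have hSx : S = (1 - x) / (θ * γ) := by rw [hx]; field_simp; ring
    have hTy : T = (1 - y) / (θ * γ) := by rw [hy]; field_simp; ring
    rw [← hx] at hS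
    rw [← hy] at hT
    rw [← hx, ← hy, hSx, hTy]
    field_simp
    ring
  have hpos : 0 ≤ θ ^ 2 * γ * (T - S) ^ 2
      / (2 * (1 - θ * γ * S) ^ 2 * (1 - θ * γ * T)) := by positivity
  linarith

lemma hasDerivAt_frozen_lagrangian {θ γ S c η : ℝ} (hθ : 0 < θ) (hS : 0 < 1 - θ * γ * S) :
    HasDerivAt (fun t => -(1 / (2 * t)) * Real.log (1 - t * γ * S) - c
        + t * S / (2 * (1 - t * γ * S)) + η / t)
      ((θ / 2 * S * ((γ * (1 - θ * γ * S) + θ) / (1 - θ * γ * S) ^ 2)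
        + 1 / 2 * Real.log (1 - θ * γ * S) - η) / θ ^ 2) θ := by
  have hx : HasDerivAt (fun t => 1 - t * γ * S) (-(1 * γ * S)) θ :=
    (((hasDerivAt_id θ).mul_const γ).mul_const S).const_sub 1
  have h2 : HasDerivAt (fun t : ℝ => 2 * t) (2 * 1) θ := (hasDerivAt_id θ).const_mul 2
  have h3 := ((hasDerivAt_const θ (1 : ℝ)).fun_div h2 (by positivity)).fun_neg
  have h4 := (h3.fun_mul (hx.log hS.ne')).sub_const c
  have h5 := ((hasDerivAt_id θ).mul_const S).fun_div (hx.const_mul 2) (by positivity)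
  have h6 := (hasDerivAt_const θ η).fun_div (hasDerivAt_id θ) hθ.ne'
  refine ((h4.fun_add h5).fun_add h6).congr_deriv ?_
  have h1 := hS.ne'
  simp only [id]
  field_simp
  ring

/-- For `θ ∈ (0, C/γ)` let `S*(θ)` be the unique fixed point in
`[1/C, 1/(θγ))` of `S = (1/C)(D/Γ(S;θ,γ)²+1)`, let `Γ*(θ) = Γ(S*(θ);θ,γ)`, let
`a*(θ) = (1/Γ*(θ))Σ⁻¹μ + (1 − A/Γ*(θ))Σ⁻¹1/C`, and set
`R(θ) = (θ/2)S*(θ)Γ*(θ) + (1/2)ln(1 − θγS*(θ))` and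
`L*(θ) = −(1/(2θ))ln(1 − θγS*(θ)) − ⟨a*(θ),μ⟩ + θS*(θ)/(2(1 − θγS*(θ))) + η/θ`.
Then any minimiser `θ*` of `L*` over `(0, C/γ)` satisfies `R(θ*) = η`: the optimal
`θ` lies on the surface of the Kullback–Leibler ball of radius `η`. -/
theorem optimal_theta_on_surface_meanVariance {n : ℕ} (hn : 1 ≤ n)
    (Sig : Matrix (Fin n) (Fin n) ℝ) (hSig : Sig.PosDef) (μ : Fin n → ℝ)
    (γ η : ℝ) (hγ : 0 < γ) (hη : 0 < η)
    (A B C D : ℝ)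
    (hA : A = (1 : Fin n → ℝ) ⬝ᵥ Sig⁻¹ *ᵥ μ)
    (hB : B = μ ⬝ᵥ Sig⁻¹ *ᵥ μ)
    (hC : C = (1 : Fin n → ℝ) ⬝ᵥ Sig⁻¹ *ᵥ (1 : Fin n → ℝ))
    (hD : D = B * C - A ^ 2)
    (Γ : ℝ → ℝ → ℝ)
    (hΓ : ∀ θ S, Γ θ S = (γ * (1 - θ * γ * S) + θ) / (1 - θ * γ * S) ^ 2)
    (Sstar : ℝ → ℝ)
    (hSstar : ∀ θ ∈ Ioo (0 : ℝ) (C / γ), Sstar θ ∈ Ico (1 / C) (1 / (θ * γ)) ∧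
        Sstar θ = 1 / C * (D / (Γ θ (Sstar θ)) ^ 2 + 1))
    (Γstar : ℝ → ℝ) (hΓstar : ∀ θ, Γstar θ = Γ θ (Sstar θ))
    (astar : ℝ → Fin n → ℝ)
    (hastar : ∀ θ, astar θ = (1 / Γstar θ) • (Sig⁻¹ *ᵥ μ)
        + (1 - A / Γstar θ) • ((1 / C) • (Sig⁻¹ *ᵥ (1 : Fin n → ℝ))))
    (R : ℝ → ℝ)
    (hR : ∀ θ, R θ = θ / 2 * Sstar θ * Γstar θ
        + 1 / 2 * Real.log (1 - θ * γ * Sstar θ))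
    (Lstar : ℝ → ℝ)
    (hLstar : ∀ θ, Lstar θ = -(1 / (2 * θ)) * Real.log (1 - θ * γ * Sstar θ)
        - astar θ ⬝ᵥ μ + θ * Sstar θ / (2 * (1 - θ * γ * Sstar θ)) + η / θ)
    (θstar : ℝ) (hmem : θstar ∈ Ioo (0 : ℝ) (C / γ))
    (hmin : ∀ θ ∈ Ioo (0 : ℝ) (C / γ), Lstar θstar ≤ Lstar θ) :
    R θstar = η := by
  have hC0 : 0 < C := by
    have h : 0 < C / γ := hmem.1.trans hmem.2
    exact (div_pos_iff_of_pos_right hγ).1 h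
  have hx : ∀ θ ∈ Ioo (0 : ℝ) (C / γ), 0 < 1 - θ * γ * Sstar θ := by
    intro θ hθ
    have h := (hSstar θ hθ).1.2
    rw [lt_div_iff₀ (mul_pos hθ.1 hγ)] at h
    linarith
  have hΓpos : ∀ θ ∈ Ioo (0 : ℝ) (C / γ), 0 < Γstar θ := by
    intro θ hθ
    rw [hΓstar, hΓ]
    have := hx θ hθ
    have := hθ.1
    positivity
  have hSp : ∀ θ ∈ Ioo (0 : ℝ) (C / γ), Sstar θ = 1 / C * (D * (1 / Γstar θ) ^ 2 + 1) := by
    intro θ hθ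
    have h := (hSstar θ hθ).2
    rw [← hΓstar] at h
    rw [h, _root_.one_div_pow, mul_one_div]
  -- `D ≥ 0` is read off from `S* ≥ 1/C`, with no appeal to Cauchy–Schwarz.
  have hD0 : 0 ≤ D := by
    have h := (hSstar θstar hmem).1.1
    have hp : 0 < (1 / Γstar θstar) ^ 2 := by
      have := hΓpos θstar hmem
      positivity
    rw [hSp θstar hmem, le_mul_iff_one_le_right (by positivity)] at h
    by_contra hneg
    nlinarith [mul_pos (neg_pos.2 (not_le.1 hneg)) hp]
  have hsymm : (Sig⁻¹ *ᵥ (1 : Fin n → ℝ)) ⬝ᵥ μ = A := by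
    have ht : Sig⁻¹ᵀ = Sig⁻¹ := by
      simpa [Matrix.IsHermitian, Matrix.conjTranspose_eq_transpose_of_trivial]
        using hSig.isHermitian.inv
    rw [hA, Matrix.dotProduct_mulVec, ← Matrix.mulVec_transpose, ht]
  have ha : ∀ θ, astar θ ⬝ᵥ μ = A / C + D / C * (1 / Γstar θ) := by
    intro θ
    have hBμ : (Sig⁻¹ *ᵥ μ) ⬝ᵥ μ = B := by rw [hB, dotProduct_comm]
    rw [hastar, add_dotProduct, smul_dotProduct, smul_dotProduct, smul_dotProduct, hsymm, hBμ, hD]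
    simp only [smul_eq_mul, div_eq_mul_inv]
    linear_combination (-B * (Γstar θ)⁻¹) * (mul_inv_cancel₀ hC0.ne')
  set S₀ := Sstar θstar with hS₀
  have hx₀ : 0 < 1 - θstar * γ * S₀ := hx θstar hmem
  have hmin₀ : IsLocalMin (fun t => -(1 / (2 * t)) * Real.log (1 - t * γ * S₀)
      - (A / C + D / C * (1 / Γstar θstar)) + t * S₀ / (2 * (1 - t * γ * S₀)) + η / t) θstar := by
    have hnear : ∀ᶠ t in nhds θstar, 0 < 1 - t * γ * S₀ := by
      have hc : ContinuousAt (fun t : ℝ => 1 - t * γ * S₀) θstar := by fun_prop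
      exact hc.eventually (lt_mem_nhds hx₀)
    filter_upwards [hnear, Ioo_mem_nhds hmem.1 hmem.2] with t ht htm
    have h1 := hmin t htm
    rw [hLstar, hLstar, ha, ha] at h1
    have h2 := variance_term_tangent_le htm.1 hγ (hx t htm) ht
    rw [← hΓ, ← hΓstar] at h2
    have hΓt := hΓpos t htm
    -- Completing the square in `p = 1/Γ`, using `Γ*(t) · (1/Γ*(t)) = 1`.
    have h3 : Γstar t / 2 * (S₀ - Sstar t) - D / C * (1 / Γstar θstar - 1 / Γstar t)
        = D / C * (Γstar t / 2) * (1 / Γstar θstar - 1 / Γstar t) ^ 2 := by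
      rw [hS₀, hSp θstar hmem, hSp t htm]
      have := (hΓpos θstar hmem).ne'
      field_simp
      ring
    have h4 : 0 ≤ D / C * (Γstar t / 2) * (1 / Γstar θstar - 1 / Γstar t) ^ 2 := by positivity
    linarith
  have hzero := hmin₀.hasDerivAt_eq_zero (hasDerivAt_frozen_lagrangian hmem.1 hx₀)
  rw [div_eq_zero_iff, or_iff_left (pow_ne_zero 2 hmem.1.ne')] at hzero
  rw [hR, hΓstar, hΓ]
  linarith
end

section
/- Let Σ be an n×n real symmetric positive definite matrix, μ ∈ ℝⁿ, γ > 0, η > 0. For θ ∈ (0, C/γ), define Γ^{GX}(θ,γ) = (γC + √(γ²C² + 4θγ(C − θγ)D)) / (2(C − θγ)), let a*(θ) = (1/Γ^{GX}(θ,γ)) Σ⁻¹μ + (1 − A/Γ^{GX}(θ,γ)) Σ⁻¹1/C, and define R(θ) = (1/2)( Γ^{GX}(θ,γ)/γ − 1 − ln(Γ^{GX}(θ,γ)/γ) ) and L*(θ) = −(1/(2θ)) ln(1 − θγ a*(θ)ᵀΣ a*(θ)) − ⟨a*(θ), μ⟩ + η/θ. Then any minimiser θ* of L* over (0, C/γ)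 satisfies R(θ*) = η; i.e. in the mean–variance problem with fixed mean, the optimal θ lies on the surface of the Kullback–Leibler ball of radius η. -/
/-!
The argument is an envelope argument. Write `u = 1/Γ`. On the line of portfolios
`a(u) = u Σ⁻¹μ + (1 - A u) Σ⁻¹1/C` one has `aᵀΣa = (1 + D u²)/C` and `⟨a,μ⟩ = (A + D u)/C`
(`portfolio_moments`), so `L*(θ) = F(θ, 1/Γ(θ))` for the explicit function `F` below
(`dualObjective`). The number `Γ(θ)` is a root of `(C - θγ)Γ² - γCΓ - θγD = 0`, which says that
`1 - θγ(1 + D u²)/C = γ/Γ`; together with `D ≥ 0` (Cauchy-Schwarz) and `log x ≤ x - 1` it follows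
that `u = 1/Γ(θ)` minimises `F(θ, ·)` (`dualObjective_min`).

Hence, if `θ*` minimises `L*` and `v = 1/Γ(θ*)`, then for `θ` near `θ*`
`F(θ*, v) = L*(θ*) ≤ L*(θ) ≤ F(θ, v)`, so `θ*` is a local minimum of the elementary function
`F(·, v)`. Its derivative at `θ*` is `(R(θ*) - η)/θ*²`, and no differentiation of `Γ` is needed.
-/

open Matrix Set

/-- The dual objective as a function of `θ` and of the weight `u` (in place of `1/Γ`) parametrising
the line of portfolios `u Σ⁻¹μ + (1 - A u) Σ⁻¹1/C`. -/
noncomputable def dualObjective (γ η A C D θ u : ℝ) : ℝ :=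
  -(1 / (2 * θ)) * Real.log (1 - θ * γ * ((1 + D * u ^ 2) / C)) - (A + D * u) / C + η / θ

/-- Cauchy-Schwarz for the bilinear form of `Σ⁻¹`, and `C > 0`. -/
lemma merton_pos {n : ℕ} (hn : 1 ≤ n) (Sig : Matrix (Fin n) (Fin n) ℝ) (hSig : Sig.PosDef)
    (μ : Fin n → ℝ) :
    0 < (1 : Fin n → ℝ) ⬝ᵥ Sig⁻¹ *ᵥ (1 : Fin n → ℝ) ∧
    0 ≤ (μ ⬝ᵥ Sig⁻¹ *ᵥ μ) * ((1 : Fin n → ℝ) ⬝ᵥ Sig⁻¹ *ᵥ (1 : Fin n → ℝ))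
      - ((1 : Fin n → ℝ) ⬝ᵥ Sig⁻¹ *ᵥ μ) ^ 2 := by
  have hS := hSig.inv
  have hsymm : μ ⬝ᵥ Sig⁻¹ *ᵥ (1 : Fin n → ℝ) = (1 : Fin n → ℝ) ⬝ᵥ Sig⁻¹ *ᵥ μ := by
    have hT : (Sig⁻¹)ᵀ = Sig⁻¹ := by
      have := hS.isHermitian.eq
      rwa [conjTranspose_eq_transpose_of_trivial] at this
    rw [dotProduct_mulVec, ← mulVec_transpose, hT, dotProduct_comm]
  have hone : (1 : Fin n → ℝ) ≠ 0 := by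
    intro h
    have := congrFun h ⟨0, hn⟩
    simp at this
  have hC : 0 < (1 : Fin n → ℝ) ⬝ᵥ Sig⁻¹ *ᵥ (1 : Fin n → ℝ) := by
    simpa using hS.dotProduct_mulVec_pos hone
  refine ⟨hC, ?_⟩
  set C := (1 : Fin n → ℝ) ⬝ᵥ Sig⁻¹ *ᵥ (1 : Fin n → ℝ) with hCdef
  set A := (1 : Fin n → ℝ) ⬝ᵥ Sig⁻¹ *ᵥ μ with hAdef
  -- Positivity of the form at `C μ - A 1` gives `C (B C - A²) ≥ 0`.
  have h := hS.posSemidef.dotProduct_mulVec_nonneg (C • μ - A • (1 : Fin n → ℝ))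
  simp only [star_trivial, mulVec_sub, mulVec_smul, dotProduct_sub, sub_dotProduct,
    smul_dotProduct, dotProduct_smul, smul_eq_mul, hsymm, ← hCdef, ← hAdef] at h
  refine nonneg_of_mul_nonneg_right (a := C) ?_ hC
  linarith

lemma portfolio_moments {n : ℕ} (Sig : Matrix (Fin n) (Fin n) ℝ) (hSig : Sig.PosDef)
    (μ : Fin n → ℝ) (A B C D u : ℝ)
    (hA : A = (1 : Fin n → ℝ) ⬝ᵥ Sig⁻¹ *ᵥ μ)
    (hB : B = μ ⬝ᵥ Sig⁻¹ *ᵥ μ)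
    (hC : C = (1 : Fin n → ℝ) ⬝ᵥ Sig⁻¹ *ᵥ (1 : Fin n → ℝ))
    (hD : D = B * C - A ^ 2) (hC0 : 0 < C) (a : Fin n → ℝ)
    (ha : a = u • (Sig⁻¹ *ᵥ μ) + (1 - A * u) • ((1 / C) • (Sig⁻¹ *ᵥ (1 : Fin n → ℝ)))) :
    a ⬝ᵥ Sig *ᵥ a = (1 + D * u ^ 2) / C ∧ a ⬝ᵥ μ = (A + D * u) / C := by
  have hunit : IsUnit Sig.det := (isUnit_iff_isUnit_det _).mp hSig.isUnit
  have hinv : ∀ x : Fin n → ℝ, Sig *ᵥ (Sig⁻¹ *ᵥ x) = x := fun x => by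
    rw [mulVec_mulVec, mul_nonsing_inv _ hunit, one_mulVec]
  have hSa : Sig *ᵥ a = u • μ + (1 - A * u) • ((1 / C) • (1 : Fin n → ℝ)) := by
    rw [ha]
    simp only [mulVec_add, mulVec_smul, hinv]
  have hT : (Sig⁻¹)ᵀ = Sig⁻¹ := by
    have := hSig.inv.isHermitian.eq
    rwa [conjTranspose_eq_transpose_of_trivial] at this
  have h1 : (Sig⁻¹ *ᵥ μ) ⬝ᵥ μ = B := by rw [dotProduct_comm, hB]
  have h2 : (Sig⁻¹ *ᵥ μ) ⬝ᵥ (1 : Fin n → ℝ) = A := by rw [dotProduct_comm, hA]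
  have h3 : (Sig⁻¹ *ᵥ (1 : Fin n → ℝ)) ⬝ᵥ (1 : Fin n → ℝ) = C := by rw [dotProduct_comm, hC]
  have h4 : (Sig⁻¹ *ᵥ (1 : Fin n → ℝ)) ⬝ᵥ μ = A := by
    rw [hA, dotProduct_mulVec, ← mulVec_transpose, hT]
  constructor
  · rw [hSa, ha]
    simp only [add_dotProduct, dotProduct_add, smul_dotProduct, dotProduct_smul, smul_eq_mul,
      h1, h2, h3, h4, hD]
    field_simp
    ring
  · rw [ha]
    simp only [add_dotProduct, smul_dotProduct, smul_eq_mul, h1, h4, hD]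
    field_simp
    ring

/-- `Γ(θ)` is positive and solves its quadratic equation, written here in the form that evaluates
the argument of the logarithm in the dual objective at `u = 1/Γ(θ)`. -/
lemma gamma_spec (γ C D θ G : ℝ) (hγ : 0 < γ) (hC : 0 < C) (hD : 0 ≤ D)
    (hθ : θ ∈ Ioo (0 : ℝ) (C / γ))
    (hG : G = (γ * C + Real.sqrt (γ ^ 2 * C ^ 2 + 4 * θ * γ * (C - θ * γ) * D))
          / (2 * (C - θ * γ))) :
    0 < G ∧ 1 - θ * γ * ((1 + D * (1 / G) ^ 2) / C) = γ / G := by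
  obtain ⟨h0, h1⟩ := hθ
  have hK : 0 < C - θ * γ := by
    rw [lt_div_iff₀ hγ] at h1
    linarith
  have hrad : 0 ≤ γ ^ 2 * C ^ 2 + 4 * θ * γ * (C - θ * γ) * D := by positivity
  have hsq := Real.sq_sqrt hrad
  have hs0 := Real.sqrt_nonneg (γ ^ 2 * C ^ 2 + 4 * θ * γ * (C - θ * γ) * D)
  set s := Real.sqrt (γ ^ 2 * C ^ 2 + 4 * θ * γ * (C - θ * γ) * D)
  have hG0 : 0 < G := by rw [hG]; positivity
  have hs : s = 2 * (C - θ * γ) * G - γ * C := by rw [hG]; field_simp; ring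
  have hquad : (C - θ * γ) * G ^ 2 - γ * C * G - θ * γ * D = 0 := by
    rw [hs] at hsq
    have : (4 * (C - θ * γ)) * ((C - θ * γ) * G ^ 2 - γ * C * G - θ * γ * D) = 0 := by
      linear_combination hsq
    exact (mul_eq_zero.mp this).resolve_left (by positivity)
  refine ⟨hG0, ?_⟩
  field_simp
  linear_combination hquad

/-- For fixed `θ`, the weight `1/Γ(θ)` minimises the dual objective over all admissible weights. -/
lemma dualObjective_min (γ η A C D θ G v : ℝ) (hγ : 0 < γ) (hC : 0 < C) (hD : 0 ≤ D)
    (hθ : 0 < θ) (hG : 0 < G)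
    (hw : 1 - θ * γ * ((1 + D * (1 / G) ^ 2) / C) = γ / G)
    (hv : 0 < 1 - θ * γ * ((1 + D * v ^ 2) / C)) :
    dualObjective γ η A C D θ (1 / G) ≤ dualObjective γ η A C D θ v := by
  unfold dualObjective
  rw [hw]
  set w := 1 - θ * γ * ((1 + D * v ^ 2) / C) with hwdef
  have hγG : 0 < γ / G := by positivity
  have hlog : Real.log w - Real.log (γ / G) ≤ w / (γ / G) - 1 := by
    rw [← Real.log_div hv.ne' hγG.ne']
    exact Real.log_le_sub_one_of_pos (by positivity)
  -- The tangent-line bound is sharp enough: the defect is a perfect square.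
  have hid : w / (γ / G) - 1
      = 2 * θ * (D / C * (1 / G - v)) - θ * D * G / C * (1 / G - v) ^ 2 := by
    have : w / (γ / G) - 1 = G / γ * (w - γ / G) := by field_simp
    rw [this, ← hw, hwdef]
    field_simp
    ring
  have hsq : 0 ≤ θ * D * G / C * (1 / G - v) ^ 2 := by positivity
  have hle : Real.log w - Real.log (γ / G) ≤ 2 * θ * (D / C * (1 / G - v)) := by linarith
  have hdiv : 1 / (2 * θ) * (Real.log w - Real.log (γ / G)) ≤ D / C * (1 / G - v) := by
    rw [one_div, inv_mul_le_iff₀ (by positivity)]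
    exact hle
  have e : (A + D * (1 / G)) / C = (A + D * v) / C + D / C * (1 / G - v) := by ring
  rw [e]
  linarith

lemma dualObjective_hasDerivAt (γ η A C D θ u : ℝ) (hθ : θ ≠ 0)
    (hw : 1 - θ * γ * ((1 + D * u ^ 2) / C) ≠ 0) :
    HasDerivAt (fun t => dualObjective γ η A C D t u)
      ((1 / 2 * (Real.log (1 - θ * γ * ((1 + D * u ^ 2) / C))
        + (1 / (1 - θ * γ * ((1 + D * u ^ 2) / C)) - 1)) - η) / θ ^ 2) θ := by
  have hlin : HasDerivAt (fun t : ℝ => 1 - t * γ * ((1 + D * u ^ 2) / C))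
      (-(γ * ((1 + D * u ^ 2) / C))) θ := by
    have := (((hasDerivAt_id θ).mul_const γ).mul_const ((1 + D * u ^ 2) / C)).const_sub 1
    simpa using this
  have hi := hasDerivAt_inv hθ
  have h := (((hi.const_mul (-(1 / 2 : ℝ))).mul (hlin.log hw)).sub_const ((A + D * u) / C)).add
    (hi.const_mul η)
  refine (h.congr_deriv ?_).congr_of_eventuallyEq (Filter.Eventually.of_forall fun t => ?_)
  · generalize hq : (1 + D * u ^ 2) / C = q at *
    field_simp
    ring
  · simp only [dualObjective, Pi.add_apply, Pi.mul_apply]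
    ring

/-- For `θ ∈ (0, C/γ)` let
`Γ^{GX}(θ) = (γC + √(γ²C² + 4θγ(C−θγ)D))/(2(C−θγ))`, let
`a*(θ) = (1/Γ^{GX}(θ))Σ⁻¹μ + (1 − A/Γ^{GX}(θ))Σ⁻¹1/C`, and set
`R(θ) = (1/2)(Γ^{GX}(θ)/γ − 1 − ln(Γ^{GX}(θ)/γ))` and
`L*(θ) = −(1/(2θ))ln(1 − θγ a*(θ)ᵀΣa*(θ)) − ⟨a*(θ),μ⟩ + η/θ`.
Then any minimiser `θ*` of `L*` over `(0, C/γ)` satisfies `R(θ*) = η`: in the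
mean–variance problem with fixed mean, the optimal `θ` lies on the surface of the
Kullback–Leibler ball of radius `η`. -/
theorem optimal_theta_on_surface_fixedMean {n : ℕ} (hn : 1 ≤ n)
    (Sig : Matrix (Fin n) (Fin n) ℝ) (hSig : Sig.PosDef) (μ : Fin n → ℝ)
    (γ η : ℝ) (hγ : 0 < γ) (hη : 0 < η)
    (A B C D : ℝ)
    (hA : A = (1 : Fin n → ℝ) ⬝ᵥ Sig⁻¹ *ᵥ μ)
    (hB : B = μ ⬝ᵥ Sig⁻¹ *ᵥ μ)
    (hC : C = (1 : Fin n → ℝ) ⬝ᵥ Sig⁻¹ *ᵥ (1 : Fin n → ℝ))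
    (hD : D = B * C - A ^ 2)
    (ΓGX : ℝ → ℝ)
    (hΓGX : ∀ θ, ΓGX θ
        = (γ * C + Real.sqrt (γ ^ 2 * C ^ 2 + 4 * θ * γ * (C - θ * γ) * D))
          / (2 * (C - θ * γ)))
    (astar : ℝ → Fin n → ℝ)
    (hastar : ∀ θ, astar θ = (1 / ΓGX θ) • (Sig⁻¹ *ᵥ μ)
        + (1 - A / ΓGX θ) • ((1 / C) • (Sig⁻¹ *ᵥ (1 : Fin n → ℝ))))
    (R : ℝ → ℝ)
    (hR : ∀ θ, R θ = 1 / 2 * (ΓGX θ / γ - 1 - Real.log (ΓGX θ / γ)))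
    (Lstar : ℝ → ℝ)
    (hLstar : ∀ θ, Lstar θ
        = -(1 / (2 * θ)) * Real.log (1 - θ * γ * (astar θ ⬝ᵥ Sig *ᵥ astar θ))
          - astar θ ⬝ᵥ μ + η / θ)
    (θstar : ℝ) (hmem : θstar ∈ Ioo (0 : ℝ) (C / γ))
    (hmin : ∀ θ ∈ Ioo (0 : ℝ) (C / γ), Lstar θstar ≤ Lstar θ) :
    R θstar = η := by
  obtain ⟨hC0, hD0⟩ := merton_pos hn Sig hSig μ
  rw [← hC] at hC0 hD0
  rw [← hA, ← hB, ← hD] at hD0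
  have hL : ∀ θ, Lstar θ = dualObjective γ η A C D θ (1 / ΓGX θ) := fun θ => by
    obtain ⟨h1, h2⟩ := portfolio_moments Sig hSig μ A B C D (1 / ΓGX θ) hA hB hC hD hC0
      (astar θ) (by rw [hastar θ, mul_one_div])
    rw [hLstar, h1, h2, dualObjective]
  obtain ⟨hG, hw⟩ := gamma_spec γ C D θstar (ΓGX θstar) hγ hC0 hD0 hmem (hΓGX θstar)
  set G := ΓGX θstar with hGdef
  have hγG : 0 < γ / G := by positivity
  -- The weight `1/G` stays admissible for `θ` near `θstar`.
  have hadm : ∀ᶠ θ in nhds θstar, 0 < 1 - θ * γ * ((1 + D * (1 / G) ^ 2) / C) := by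
    have hcont : ContinuousAt (fun θ : ℝ => 1 - θ * γ * ((1 + D * (1 / G) ^ 2) / C)) θstar := by
      fun_prop
    exact hcont.eventually (lt_mem_nhds (hγG.trans_eq hw.symm))
  have hloc : IsLocalMin (fun θ => dualObjective γ η A C D θ (1 / G)) θstar := by
    filter_upwards [hadm, Ioo_mem_nhds hmem.1 hmem.2] with θ hθ hθI
    obtain ⟨hG', hw'⟩ := gamma_spec γ C D θ (ΓGX θ) hγ hC0 hD0 hθI (hΓGX θ)
    calc dualObjective γ η A C D θstar (1 / G) = Lstar θstar := (hL θstar).symm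
      _ ≤ Lstar θ := hmin θ hθI
      _ = dualObjective γ η A C D θ (1 / ΓGX θ) := hL θ
      _ ≤ dualObjective γ η A C D θ (1 / G) :=
        dualObjective_min γ η A C D θ (ΓGX θ) (1 / G) hγ hC0 hD0 hθI.1 hG' hw' hθ
  have hder := hloc.hasDerivAt_eq_zero
    (dualObjective_hasDerivAt γ η A C D θstar (1 / G) hmem.1.ne' (by rw [hw]; exact hγG.ne'))
  rw [hw, div_eq_zero_iff] at hder
  have h0 := hder.resolve_right (pow_ne_zero 2 hmem.1.ne')
  have hlog : Real.log (γ / G) = -Real.log (G / γ) := by rw [← Real.log_inv, inv_div]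
  rw [hlog, one_div_div] at h0
  rw [hR, ← hGdef]
  linarith
end
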